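/- arXiv:2102.04651 — 8 statements merged into one kernel-verified Lean document; each statement's English description precedes it below -/
import Mathlib

section
/- For every integer r ≥ 1 there exist a constant ε₀ > 0 and a positive real c_r depending only on r such that for all real 0 < ε ≤ ε₀ and all integers k ≥ 2^r · r! · ε^{-1} · (log(1/(5ε)))^r, the ε-approximate Van der Waerden number satisfies c_r · k^r / (ε^{r-1} · (log(1/ε))^{\binom{r+1}{2}-1}) ≤ W_ε(k,r) ≤ 2k^r / ε^{r-1}. -/
/-- `x 0, …, x (k-1)` is an `ε`-approximate arithmetic progression of length `k`:
there exist a real `a` and a real `d > 0` with `|x i - (a + i·d)| < ε·d` for all `i < k`. -/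
def IsAPeps (ε : ℝ) (k : ℕ) (x : ℕ → ℤ) : Prop :=
  ∃ a d : ℝ, 0 < d ∧ ∀ i < k, |(x i : ℝ) - (a + (i : ℝ) * d)| < ε * d

/-- Every `r`-coloring of `{1,…,N}` contains a monochromatic `AP_k(ε)`. -/
def HasMonoAPeps (ε : ℝ) (k r N : ℕ) : Prop :=
  ∀ c : ℤ → Fin r, ∃ x : ℕ → ℤ,
    (∀ i < k, x i ∈ Finset.Icc (1 : ℤ) (N : ℤ)) ∧
    (∀ i < k, ∀ j < k, c (x i) = c (x j)) ∧
    IsAPeps ε k x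

/-- The ε-approximate Van der Waerden number `W_ε(k,r)`: the least positive integer `N`
such that every `r`-coloring of `{1,…,N}` contains a monochromatic `AP_k(ε)`. -/
noncomputable def Weps (ε : ℝ) (k r : ℕ) : ℕ :=
  sInf {N : ℕ | 0 < N ∧ HasMonoAPeps ε k r N}

/-!
For the upper bound, put `k` windows of length `2 X` at distance `X / ε` from each other. If every
window contains the colour `s`, choosing one such point per window gives the progression; otherwise
a whole window avoids `s`, and one colour fewer is available there.

For the lower bound, blow up a colouring with `r` colours: cut the integers into blocks of length
`n`, and colour each block by a progression-free colouring of `{1, …, n}` with all of the `r + 1`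
colours but one. Consider a monochromatic progression with common difference `d`. If `d ≤ n / 2`,
it meets every block between its ends, but never a block that omits its own colour, so it stays in
few blocks and has a long stretch inside a single one of them. If `d > n / 2`, its first and last
terms determine the block of each of its terms up to two neighbouring choices. Let the omitted
colours be random: it is then exponentially unlikely (in `k`) that the progression never meets a
block omitting its colour, so a union bound over the two end terms excludes all such progressions.
-/

open Finset Filter Topology

section Counting

variable {ι κ β Ω : Type*} [Fintype Ω]

lemma card_le_card_mul_of_piecewise_mem [DecidableEq ι] {S A : Finset (ι → Ω)} {J : Finset ι}
    {τ : ι → Ω} (hA : ∀ s ∈ S, J.piecewise τ s ∈ A) : #S ≤ #A * Fintype.card Ω ^ #J := by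
  calc #S ≤ #(A ×ˢ (univ : Finset (J → Ω))) := by
        refine card_le_card_of_injOn (fun s ↦ (J.piecewise τ s, fun g ↦ s g)) ?_ ?_
        · intro s hs
          simpa using hA s hs
        · intro s _ s' _ h
          obtain ⟨houtside, hinside⟩ := Prod.mk.inj h
          funext g
          by_cases hg : g ∈ J
          · exact congrFun hinside ⟨g, hg⟩
          · simpa [hg] using congrFun houtside g
    _ = #A * Fintype.card Ω ^ #J := by simp

lemma one_sub_one_div_natCast_pow_mem_Ico {n : ℕ} (hn : n ≠ 0) (m : ℕ) :
    1 - 1 / (n : ℝ) ^ m ∈ Set.Ico (0 : ℝ) 1 := by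
  have hpow : (1 : ℝ) ≤ (n : ℝ) ^ m := one_le_pow₀ (by exact_mod_cast Nat.one_le_iff_ne_zero.2 hn)
  have hle : 1 / (n : ℝ) ^ m ≤ 1 := div_le_one_of_le₀ hpow (by positivity)
  have hpos : 0 < 1 / (n : ℝ) ^ m := by positivity
  constructor <;> linarith

lemma card_filter_forall_exists_ne_le [Fintype ι] [DecidableEq ι] [DecidableEq Ω] [Nonempty Ω]
    {m : ℕ} (K : Finset κ) (J : κ → Finset ι) (τ : κ → ι → Ω)
    (hJ : (K : Set κ).PairwiseDisjoint J) (hm : ∀ t ∈ K, #(J t) ≤ m) :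
    (#{s : ι → Ω | ∀ t ∈ K, ∃ g ∈ J t, s g ≠ τ t g} : ℝ) ≤
      Fintype.card (ι → Ω) * (1 - 1 / (Fintype.card Ω : ℝ) ^ m) ^ #K := by
  classical
  induction K using Finset.induction_on with
  | empty => simp
  | insert t K ht ih =>
    set q : ℝ := 1 - 1 / (Fintype.card Ω : ℝ) ^ m with hq
    have hq0 : 0 ≤ q := (one_sub_one_div_natCast_pow_mem_Ico Fintype.card_ne_zero m).1
    set S : Finset (ι → Ω) := {s | ∀ t ∈ K, ∃ g ∈ J t, s g ≠ τ t g} with hS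
    have ih : (#S : ℝ) ≤ Fintype.card (ι → Ω) * q ^ #K :=
      ih (hJ.subset (by simp)) fun t' ht' ↦ hm t' (mem_insert_of_mem ht')
    have hforce : ∀ s ∈ S, (J t).piecewise (τ t) s ∈ {s ∈ S | ∀ g ∈ J t, s g = τ t g} := by
      simp only [hS, mem_filter, mem_univ, true_and]
      refine fun s hs ↦ ⟨fun t' ht' ↦ ?_, fun g hg ↦ piecewise_eq_of_mem _ _ _ hg⟩
      obtain ⟨g, hg, hne⟩ := hs t' ht'
      have hdisj : Disjoint (J t') (J t) :=
        hJ (by simp [ht']) (by simp) (ne_of_mem_of_not_mem ht' ht)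
      exact ⟨g, hg, by rwa [piecewise_eq_of_notMem _ _ _ (disjoint_left.1 hdisj hg)]⟩
    have hhit : (#S : ℝ) * (1 / (Fintype.card Ω : ℝ) ^ m) ≤
        #{s ∈ S | ∀ g ∈ J t, s g = τ t g} := by
      rw [mul_one_div, div_le_iff₀ (by positivity), ← Nat.cast_pow, ← Nat.cast_mul, Nat.cast_le]
      have hpow : Fintype.card Ω ^ #(J t) ≤ Fintype.card Ω ^ m :=
        Nat.pow_le_pow_right Fintype.card_pos (hm t (mem_insert_self t K))
      exact (card_le_card_mul_of_piecewise_mem hforce).trans (Nat.mul_le_mul_left _ hpow)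
    have hsplit : #{s ∈ S | ∀ g ∈ J t, s g = τ t g} +
        #{s : ι → Ω | ∀ t' ∈ insert t K, ∃ g ∈ J t', s g ≠ τ t' g} = #S := by
      rw [← card_filter_add_card_filter_not (s := S) fun s ↦ ∀ g ∈ J t, s g = τ t g]
      congr 2
      ext s
      simp [hS, and_comm]
    calc (#{s : ι → Ω | ∀ t' ∈ insert t K, ∃ g ∈ J t', s g ≠ τ t' g} : ℝ)
        = #S - #{s ∈ S | ∀ g ∈ J t, s g = τ t g} := by
          rw [← hsplit]; push_cast; ring
      _ ≤ #S * q := by rw [hq]; linarith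
      _ ≤ Fintype.card (ι → Ω) * q ^ #K * q := by gcongr
      _ = Fintype.card (ι → Ω) * q ^ #(insert t K) := by
          rw [card_insert_of_notMem ht]; ring

lemma exists_forall_exists_forall_mem_eq_of_finite [Finite ι] [Nonempty Ω] {m : ℕ}
    (E : Finset β) (K : Finset κ) (J : β → κ → Finset ι) (τ : β → κ → ι → Ω)
    (hJ : ∀ e ∈ E, (K : Set κ).PairwiseDisjoint (J e)) (hm : ∀ e ∈ E, ∀ t ∈ K, #(J e t) ≤ m)
    (hE : #E * (1 - 1 / (Fintype.card Ω : ℝ) ^ m) ^ #K < 1) :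
    ∃ s : ι → Ω, ∀ e ∈ E, ∃ t ∈ K, ∀ g ∈ J e t, s g = τ e t g := by
  classical
  have := Fintype.ofFinite ι
  by_contra! hbad
  have hcover : (univ : Finset (ι → Ω)) ⊆
      E.biUnion fun e ↦ {s | ∀ t ∈ K, ∃ g ∈ J e t, s g ≠ τ e t g} := fun s _ ↦ by
    simpa using hbad s
  have hpos : (0 : ℝ) < Fintype.card (ι → Ω) := by exact_mod_cast Fintype.card_pos
  have hlt : (Fintype.card (ι → Ω) : ℝ) < Fintype.card (ι → Ω) :=
    calc (Fintype.card (ι → Ω) : ℝ)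
        ≤ ∑ e ∈ E, (#{s : ι → Ω | ∀ t ∈ K, ∃ g ∈ J e t, s g ≠ τ e t g} : ℝ) := by
          exact_mod_cast (card_le_card hcover).trans card_biUnion_le
      _ ≤ ∑ _e ∈ E, Fintype.card (ι → Ω) * (1 - 1 / (Fintype.card Ω : ℝ) ^ m) ^ #K :=
          sum_le_sum fun e he ↦ card_filter_forall_exists_ne_le K (J e) (τ e) (hJ e he) (hm e he)
      _ = Fintype.card (ι → Ω) * (#E * (1 - 1 / (Fintype.card Ω : ℝ) ^ m) ^ #K) := by
          rw [sum_const, nsmul_eq_mul]; ring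
      _ < Fintype.card (ι → Ω) := mul_lt_of_lt_one_right hpos hE
  exact hlt.false

lemma exists_forall_exists_forall_mem_eq [Nonempty Ω] {m : ℕ}
    (E : Finset β) (K : Finset κ) (J : β → κ → Finset ι) (τ : β → κ → ι → Ω)
    (hJ : ∀ e ∈ E, (K : Set κ).PairwiseDisjoint (J e)) (hm : ∀ e ∈ E, ∀ t ∈ K, #(J e t) ≤ m)
    (hE : #E * (1 - 1 / (Fintype.card Ω : ℝ) ^ m) ^ #K < 1) :
    ∃ s : ι → Ω, ∀ e ∈ E, ∃ t ∈ K, ∀ g ∈ J e t, s g = τ e t g := by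
  classical
  set I : Finset ι := E.biUnion fun e ↦ K.biUnion (J e)
  obtain ⟨s, hs⟩ := exists_forall_exists_forall_mem_eq_of_finite (ι := I) (m := m) E K
    (fun e t ↦ (J e t).subtype (· ∈ I)) (fun e t g ↦ τ e t g)
    (fun e he t ht t' ht' hne ↦ disjoint_left.2 fun g hg hg' ↦
      disjoint_left.1 (hJ e he ht ht' hne) (mem_subtype.1 hg) (mem_subtype.1 hg'))
    (fun e he t ht ↦ (card_subtype _ _).trans_le ((card_filter_le _ _).trans (hm e he t ht))) hE
  refine ⟨fun g ↦ if hg : g ∈ I then s ⟨g, hg⟩ else Classical.arbitrary Ω, fun e he ↦ ?_⟩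
  obtain ⟨t, ht, heq⟩ := hs e he
  refine ⟨t, ht, fun g hg ↦ ?_⟩
  have hgI : g ∈ I := mem_biUnion.2 ⟨e, he, mem_biUnion.2 ⟨t, ht, hg⟩⟩
  simpa only [dif_pos hgI] using heq ⟨g, hgI⟩ (mem_subtype.2 hg)

end Counting

section MissingColour

variable {γ : Type*}

lemma exists_surjective_apply_eq_apply_eq {α : Type*} [Fintype α] [Fintype γ]
    (h : Fintype.card γ < Fintype.card α) (a b : α) (c : γ) :
    ∃ f : α → γ, Function.Surjective f ∧ f a = c ∧ f b = c := by
  classical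
  have hcard : Fintype.card {y // y ≠ c} ≤ Fintype.card {z // z ∉ ({a, b} : Finset α)} := by
    rw [Fintype.card_subtype_compl, Fintype.card_subtype_compl, Fintype.card_subtype_eq,
      Fintype.card_coe]
    have := card_le_two (a := a) (b := b)
    omega
  obtain ⟨g⟩ := Function.Embedding.nonempty_of_card_le hcard
  set f : α → γ := Function.extend (fun y ↦ (g y : α)) Subtype.val fun _ ↦ c
  have hinj : Function.Injective fun y ↦ (g y : α) := Subtype.val_injective.comp g.injective
  have houtside : ∀ z ∈ ({a, b} : Finset α), f z = c := fun z hz ↦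
    Function.extend_apply' _ _ _ fun ⟨y, hy⟩ ↦ (g y).2 (hy ▸ hz)
  refine ⟨f, fun y ↦ ?_, houtside a (by simp), houtside b (by simp)⟩
  by_cases hy : y = c
  · exact ⟨a, by rw [houtside a (by simp), hy]⟩
  · exact ⟨g ⟨y, hy⟩, hinj.extend_apply _ _ ⟨y, hy⟩⟩

lemma exists_mem_Ico_apply_ediv_eq {p : ℕ} [NeZero p] {s : ℤ → ZMod p → γ}
    (hs : ∀ g, Function.Surjective (s g)) (a : ℤ) (c : γ) :
    ∃ b ∈ Set.Ico a (a + 2 * p), s (b / p) b = c := by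
  obtain ⟨z, hz⟩ := hs (a / p + 1) c
  have hp : (0 : ℤ) < p := by exact_mod_cast NeZero.pos p
  have hz0 : (0 : ℤ) ≤ z.val := by positivity
  have hzp : (z.val : ℤ) < p := by exact_mod_cast z.val_lt
  have hlower := Int.lt_ediv_add_one_mul_self a hp
  have hupper := Int.ediv_mul_le a hp.ne'
  refine ⟨z.val + (a / p + 1) * p, ⟨by linarith, by linarith⟩, ?_⟩
  rw [Int.add_mul_ediv_right _ _ hp.ne', Int.ediv_eq_zero_of_lt hz0 hzp, zero_add]
  simpa using hz

lemma disjoint_pair_ediv_of_add_lt {p y z : ℤ} (hp : 0 < p) (h : y + p < z) :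
    Disjoint ({y / p, (y + 1) / p} : Finset ℤ) {z / p, (z + 1) / p} := by
  have hmono (w : ℤ) : w / p ≤ (w + 1) / p := Int.ediv_le_ediv hp (by omega)
  have hlt : (y + 1) / p < z / p := by
    have hle : (y + 1 + 1 * p) / p ≤ z / p := Int.ediv_le_ediv hp (by omega)
    rw [Int.add_mul_ediv_right _ _ hp.ne'] at hle
    omega
  have hy := hmono y
  have hz := hmono z
  simp only [disjoint_left, mem_insert, mem_singleton]
  omega

/- Cut `ℤ` into groups of `|γ| + 1` integers and let `m` map each group onto `γ`, by a uniformly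
random surjection chosen independently of the other groups. Consecutive integers both have
`m`-value `c` with probability bounded below, because `|γ| + 1` places leave room to repeat `c`. -/
lemma exists_map_attaining_and_repeating (γ : Type*) [Fintype γ] [Nonempty γ] :
    ∃ q ∈ Set.Ico (0 : ℝ) 1, ∀ (E : Finset (ℕ → ℤ)) (T : ℕ),
      (∀ b ∈ E, ∀ t t', t < t' → b t + (Fintype.card γ + 2) ≤ b t') →
      #E * Fintype.card γ * q ^ T < 1 →
      ∃ m : ℤ → γ, (∀ (a : ℤ) c, ∃ b ∈ Set.Ico a (a + 2 * (Fintype.card γ + 1)), m b = c) ∧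
        ∀ b ∈ E, ∀ c, ∃ t < T, m (b t) = c ∧ m (b t + 1) = c := by
  set p : ℕ := Fintype.card γ + 1
  let Ω := {f : ZMod p → γ // Function.Surjective f}
  have : Fintype Ω := Fintype.ofFinite Ω
  have hcard : Fintype.card γ < Fintype.card (ZMod p) := by rw [ZMod.card]; omega
  choose f hsurj hfirst hsecond using
    fun (y : ℤ) (c : γ) ↦ exists_surjective_apply_eq_apply_eq hcard (y : ZMod p) (y + 1 : ℤ) c
  have : Nonempty Ω := ⟨⟨f 0 (Classical.arbitrary γ), hsurj _ _⟩⟩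
  refine ⟨1 - 1 / (Fintype.card Ω : ℝ) ^ 2,
    one_sub_one_div_natCast_pow_mem_Ico Fintype.card_ne_zero 2, fun E T hsep hE ↦ ?_⟩
  have hdisj : ∀ b ∈ E, ∀ t t', t < t' →
      Disjoint ({b t / (p : ℤ), (b t + 1) / (p : ℤ)} : Finset ℤ)
        {b t' / (p : ℤ), (b t' + 1) / (p : ℤ)} := fun b hb t t' htt' ↦
    disjoint_pair_ediv_of_add_lt (by omega) (by have := hsep b hb t t' htt'; omega)
  obtain ⟨s, hs⟩ := exists_forall_exists_forall_mem_eq (Ω := Ω) (m := 2) (E ×ˢ univ) (range T)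
    (fun e t ↦ {e.1 t / (p : ℤ), (e.1 t + 1) / (p : ℤ)})
    (fun e t _ ↦ ⟨f (e.1 t) e.2, hsurj _ _⟩)
    (fun e he t _ t' _ hne ↦ by
      have hb := (mem_product.1 he).1
      rcases hne.lt_or_gt with h | h
      exacts [hdisj _ hb _ _ h, (hdisj _ hb _ _ h).symm])
    (fun _ _ _ _ ↦ card_le_two) (by simpa using hE)
  refine ⟨fun y ↦ (s (y / p)).1 y, fun a c ↦ ?_, fun b hb c ↦ ?_⟩
  · exact_mod_cast exists_mem_Ico_apply_ediv_eq (fun g ↦ (s g).2) a c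
  · obtain ⟨t, ht, heq⟩ := hs (b, c) (by simpa using hb)
    have hhere := congrArg Subtype.val (heq (b t / p) (by simp))
    have hnext := congrArg Subtype.val (heq ((b t + 1) / p) (by simp))
    exact ⟨t, mem_range.1 ht, (congrFun hhere _).trans (hfirst _ _),
      (congrFun hnext _).trans (hsecond _ _)⟩

end MissingColour

section Progression

/-- `IsAPeps` with its witnesses: `x 0, …, x (k-1)` follows `a, a + d, a + 2 * d, …` up to an
error less than `ε * d`. -/
def IsAPepsWith (ε : ℝ) (k : ℕ) (x : ℕ → ℤ) (a d : ℝ) : Prop :=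
  0 < d ∧ ∀ i < k, |(x i : ℝ) - (a + i * d)| < ε * d

/-- The common difference of the exact arithmetic progression with `k` terms that starts at `u` and
ends at `v`. It is meaningful for `2 ≤ k` only. -/
noncomputable def meanGap (k : ℕ) (u v : ℤ) : ℝ := (v - u) / (k - 1)

namespace IsAPepsWith

variable {ε : ℝ} {k : ℕ} {x : ℕ → ℤ} {a d : ℝ}

lemma isAPeps (h : IsAPepsWith ε k x a d) : IsAPeps ε k x := ⟨a, d, h⟩

lemma abs_sub_sub_lt (h : IsAPepsWith ε k x a d) {i j : ℕ} (hi : i < k) (hj : j < k) :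
    |(x j : ℝ) - x i - (j - i) * d| < 2 * ε * d := by
  have hxi := abs_lt.1 (h.2 i hi)
  have hxj := abs_lt.1 (h.2 j hj)
  rw [abs_lt]
  constructor <;> linarith

lemma strictMonoOn (h : IsAPepsWith ε k x a d) (hε : ε ≤ 1 / 2) : StrictMonoOn x (Set.Iio k) := by
  refine strictMonoOn_of_lt_add_one Set.ordConnected_Iio fun i _ hi hi' ↦ ?_
  have hstep := (abs_lt.1 (h.abs_sub_sub_lt hi hi')).1
  push_cast at hstep
  have hεd : ε * d ≤ 1 / 2 * d := mul_le_mul_of_nonneg_right hε h.1.le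
  have : (x i : ℝ) < x (i + 1) := by linarith
  exact_mod_cast this

lemma shift (h : IsAPepsWith ε k x a d) {i₀ k' : ℕ} (hk : i₀ + k' ≤ k) (z : ℤ) :
    IsAPepsWith ε k' (fun i ↦ x (i₀ + i) - z) (a + i₀ * d - z) d := by
  refine ⟨h.1, fun i hi ↦ ?_⟩
  convert h.2 (i₀ + i) (by omega) using 2
  push_cast
  ring

lemma abs_meanGap_sub_mul_lt (h : IsAPepsWith ε k x a d) (hk : 2 ≤ k) :
    |meanGap k (x 0) (x (k - 1)) - d| * (k - 1) < 2 * ε * d := by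
  have hk' : (0 : ℝ) < k - 1 := by
    have : (2 : ℝ) ≤ k := by exact_mod_cast hk
    linarith
  have hends := h.abs_sub_sub_lt (i := 0) (j := k - 1) (by omega) (by omega)
  push_cast [show 1 ≤ k by omega] at hends
  calc |meanGap k (x 0) (x (k - 1)) - d| * (k - 1)
      = |(meanGap k (x 0) (x (k - 1)) - d) * (k - 1)| := by rw [abs_mul, abs_of_pos hk']
    _ = |(x (k - 1) : ℝ) - x 0 - (k - 1 - 0) * d| := by
        rw [sub_mul, meanGap, div_mul_cancel₀ _ hk'.ne', sub_zero]
        ring_nf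
    _ < 2 * ε * d := hends

lemma half_le_meanGap (h : IsAPepsWith ε k x a d) (hk : 2 ≤ k) (hε : ε ≤ 1 / 4) :
    d / 2 ≤ meanGap k (x 0) (x (k - 1)) := by
  have hk' : (2 : ℝ) ≤ k := by exact_mod_cast hk
  have hdiff : |meanGap k (x 0) (x (k - 1)) - d| ≤
      |meanGap k (x 0) (x (k - 1)) - d| * (k - 1) :=
    le_mul_of_one_le_right (abs_nonneg _) (by linarith)
  have hεd : ε * d ≤ 1 / 4 * d := mul_le_mul_of_nonneg_right hε h.1.le
  linarith [h.abs_meanGap_sub_mul_lt hk, neg_abs_le (meanGap k (x 0) (x (k - 1)) - d)]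

lemma abs_sub_add_mul_meanGap_lt (h : IsAPepsWith ε k x a d) (hk : 2 ≤ k) (hε₀ : 0 ≤ ε)
    (hε : ε ≤ 1 / 4) {i : ℕ} (hi : i < k) :
    |(x i : ℝ) - (x 0 + i * meanGap k (x 0) (x (k - 1)))| <
      8 * ε * meanGap k (x 0) (x (k - 1)) := by
  set D := meanGap k (x 0) (x (k - 1))
  have hi' : (i : ℝ) ≤ k - 1 := by
    have : (i : ℝ) + 1 ≤ k := by exact_mod_cast hi
    linarith
  have hstart := h.abs_sub_sub_lt (i := 0) (j := i) (by omega) hi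
  rw [Nat.cast_zero, sub_zero] at hstart
  calc |(x i : ℝ) - (x 0 + i * D)| = |(x i - x 0 - i * d) - i * (D - d)| := by ring_nf
    _ ≤ |(x i : ℝ) - x 0 - i * d| + i * |D - d| := by
        rw [← Nat.abs_cast i, ← abs_mul, Nat.abs_cast i]
        exact abs_sub _ _
    _ < 2 * ε * d + 2 * ε * d := by
        have hdrift : i * |D - d| ≤ |D - d| * (k - 1) := by
          rw [mul_comm]
          gcongr
        linarith [h.abs_meanGap_sub_mul_lt hk]
    _ = 8 * ε * (d / 2) := by ring
    _ ≤ 8 * ε * D := by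
        gcongr
        exact h.half_le_meanGap hk hε

end IsAPepsWith

end Progression

section UpperBound

variable {γ : Type*} {ε : ℝ} {k : ℕ}

/- The windows `(A + i (X / ε), A + i (X / ε) + 2 X)` either all meet the colour `s`, which gives
the progression, or one of them avoids it. -/
lemma exists_isAPeps_or_exists_forall_ne (hε₀ : 0 < ε) (hε : ε ≤ 1 / 2) {X : ℝ} (hX : 1 ≤ X)
    {N : ℕ} (hN : k * (X / ε) ≤ N) (c : ℤ → γ) (s : γ) (A : ℤ) :
    (∃ x : ℕ → ℤ, (∀ i < k, x i ∈ Ioc A (A + N)) ∧ (∀ i < k, c (x i) = s) ∧ IsAPeps ε k x) ∨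
      ∃ A' : ℤ, Ioc A' (A' + ⌈X⌉₊) ⊆ Ioc A (A + N) ∧ ∀ y ∈ Ioc A' (A' + ⌈X⌉₊), c y ≠ s := by
  have hgap : 2 * X ≤ X / ε := by
    rw [le_div_iff₀ hε₀]
    nlinarith
  have hwindow : ∀ i < k, 0 ≤ i * (X / ε) ∧ i * (X / ε) + 2 * X ≤ N := fun i hi ↦ by
    have hle : ((i : ℝ) + 1) * (X / ε) ≤ k * (X / ε) := by
      gcongr
      exact_mod_cast hi
    exact ⟨by positivity, by linarith⟩
  by_cases hmeet :
    ∀ i < k, ∃ y : ℤ, c y = s ∧ A + i * (X / ε) < y ∧ (y : ℝ) < A + i * (X / ε) + 2 * X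
  · left
    choose! x hcx hlower hupper using hmeet
    refine ⟨x, fun i hi ↦ mem_Ioc.2 ⟨?_, ?_⟩, hcx, A + X, X / ε, by positivity, fun i hi ↦ ?_⟩
    · have : (A : ℝ) < x i := by linarith [(hwindow i hi).1, hlower i hi]
      exact_mod_cast this
    · have : (x i : ℝ) ≤ A + N := by linarith [(hwindow i hi).2, hupper i hi]
      exact_mod_cast this
    · rw [mul_div_cancel₀ _ hε₀.ne', abs_lt]
      constructor <;> linarith [hlower i hi, hupper i hi]
  · right
    push Not at hmeet
    obtain ⟨i, hi, havoid⟩ := hmeet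
    set A' := ⌊A + i * (X / ε)⌋
    have hceil : (⌈X⌉₊ : ℝ) < X + 1 := Nat.ceil_lt_add_one (by linarith)
    have hfloor : (A' : ℝ) ≤ A + i * (X / ε) := Int.floor_le _
    have hfloor' : A + i * (X / ε) < A' + 1 := Int.lt_floor_add_one _
    refine ⟨A', Ioc_subset_Ioc (Int.le_floor.2 (by linarith [(hwindow i hi).1])) ?_,
      fun y hy hcy ↦ ?_⟩
    · have : (A' : ℝ) + ⌈X⌉₊ ≤ A + N := by linarith [(hwindow i hi).2]
      exact_mod_cast this
    · have hlower : (A' : ℝ) + 1 ≤ y := by exact_mod_cast (mem_Ioc.1 hy).1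
      have hupper : (y : ℝ) ≤ A' + ⌈X⌉₊ := by exact_mod_cast (mem_Ioc.1 hy).2
      linarith [havoid y hcy (by linarith)]

lemma one_le_pow_div_pow {κ : ℝ} (hκ : 1 ≤ κ) (hε₀ : 0 < ε) (hε : ε ≤ 1) (m n : ℕ) :
    1 ≤ κ ^ m / ε ^ n := by
  rw [one_le_div₀ (by positivity)]
  exact (pow_le_one₀ hε₀.le hε).trans (one_le_pow₀ hκ)

lemma exists_isAPeps_of_mapsTo (hε₀ : 0 < ε) (hε : ε ≤ 1 / 2) (hk : k ≠ 0) {c : ℤ → γ} {r : ℕ}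
    {S : Finset γ} (hS : #S = r + 1) {N : ℕ} (hN : (k : ℝ) ^ (r + 1) / ε ^ r ≤ N) {A : ℤ}
    (hc : ∀ y ∈ Ioc A (A + N), c y ∈ S) :
    ∃ x : ℕ → ℤ, (∀ i < k, x i ∈ Ioc A (A + N)) ∧ (∃ s, ∀ i < k, c (x i) = s) ∧ IsAPeps ε k x := by
  classical
  induction r generalizing S N A with
  | zero =>
    obtain ⟨s, rfl⟩ := card_eq_one.1 hS
    have hkN : k ≤ N := by simpa using hN
    have hmem : ∀ i < k, A + 1 + i ∈ Ioc A (A + N) := fun i hi ↦ mem_Ioc.2 (by omega)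
    refine ⟨fun i ↦ A + 1 + i, hmem, ⟨s, fun i hi ↦ mem_singleton.1 (hc _ (hmem i hi))⟩,
      A + 1, 1, one_pos, fun i _ ↦ ?_⟩
    simpa using hε₀
  | succ r ih =>
    obtain ⟨s, hs⟩ : S.Nonempty := card_pos.1 (by omega)
    set X : ℝ := (k : ℝ) ^ (r + 1) / ε ^ r with hX
    have hX1 : 1 ≤ X := one_le_pow_div_pow (by exact_mod_cast Nat.one_le_iff_ne_zero.2 hk) hε₀
      (by linarith) _ _
    have hXN : k * (X / ε) ≤ N := by
      convert hN using 1
      rw [hX]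
      field_simp
      ring
    obtain ⟨x, hmem, hcx, hx⟩ | ⟨A', hsub, hne⟩ :=
      exists_isAPeps_or_exists_forall_ne hε₀ hε hX1 hXN c s A
    · exact ⟨x, hmem, ⟨s, hcx⟩, hx⟩
    · obtain ⟨x, hmem, hcx, hx⟩ := ih (S := S.erase s) (by rw [card_erase_of_mem hs]; omega)
        (Nat.le_ceil X) fun y hy ↦ mem_erase.2 ⟨hne y hy, hc y (hsub hy)⟩
      exact ⟨x, fun i hi ↦ hsub (hmem i hi), hcx, hx⟩

lemma hasMonoAPeps_of_le (hε₀ : 0 < ε) (hε : ε ≤ 1 / 2) (hk : k ≠ 0) {r N : ℕ}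
    (hN : (k : ℝ) ^ (r + 1) / ε ^ r ≤ N) : HasMonoAPeps ε k (r + 1) N := fun c ↦ by
  obtain ⟨x, hmem, ⟨s, hcx⟩, hx⟩ := exists_isAPeps_of_mapsTo hε₀ hε hk (c := c) (S := univ)
    (A := 0) (card_fin _) hN fun _ _ ↦ mem_univ _
  refine ⟨x, fun i hi ↦ ?_, fun i hi j hj ↦ (hcx i hi).trans (hcx j hj).symm, hx⟩
  simpa [Int.lt_iff_add_one_le] using hmem i hi

end UpperBound

section BlockColouring

/-- `c` is a colouring of `{1, …, N}` without a monochromatic `AP_k(ε)`. As in `HasMonoAPeps`,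
colourings are defined on all of `ℤ`. -/
def APepsFree {γ : Type*} (ε : ℝ) (k N : ℕ) (c : ℤ → γ) : Prop :=
  ∀ x : ℕ → ℤ, (∀ i < k, x i ∈ Icc (1 : ℤ) N) → (∀ i < k, ∀ j < k, c (x i) = c (x j)) →
    ¬ IsAPeps ε k x

/-- Split `ℤ` into the blocks `{y | y / n = b}` and colour each of them by a copy of the colouring
`χ` of `{1, …, n}`, whose `r` colours are renamed so that block `b` omits the colour `m b`. -/
def blockColouring {r : ℕ} (n : ℕ) (m : ℤ → Fin (r + 1)) (χ : ℤ → Fin r) (y : ℤ) : Fin (r + 1) :=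
  (m (y / n)).succAbove (χ (y % n + 1))

variable {ε : ℝ} {k : ℕ}

lemma apepsFree_of_lt {γ : Type*} (hε : ε ≤ 1 / 2) {N : ℕ} (hN : N < k) (c : ℤ → γ) :
    APepsFree ε k N c := by
  rintro x hx - ⟨a, d, h : IsAPepsWith ε k x a d⟩
  have hcard : #(range k) ≤ #(Icc (1 : ℤ) N) :=
    card_le_card_of_injOn x (fun i hi ↦ hx i (mem_range.1 hi))
      (by simpa using (h.strictMonoOn hε).injOn)
  simp only [card_range, Int.card_Icc] at hcard
  omega

lemma APepsFree.not_hasMonoAPeps {r N : ℕ} {c : ℤ → Fin r} (h : APepsFree ε k N c) :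
    ¬ HasMonoAPeps ε k r N := fun hmono ↦
  let ⟨x, hmem, hcx, hx⟩ := hmono c
  h x hmem hcx hx

variable {r n : ℕ} {m : ℤ → Fin (r + 1)} {χ : ℤ → Fin r} {x : ℕ → ℤ} {a d : ℝ}

lemma APepsFree.not_forall_ediv_eq {k' : ℕ} (hχ : APepsFree ε k' n χ) (hn : 0 < n)
    (hx : IsAPepsWith ε k x a d)
    (hmono : ∀ i < k, ∀ j < k, blockColouring n m χ (x i) = blockColouring n m χ (x j))
    {i₀ : ℕ} (hi₀ : i₀ + k' ≤ k) (β : ℤ) : ¬ ∀ i < k', x (i₀ + i) / n = β := by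
  intro hβ
  have hn' : (0 : ℤ) < n := by exact_mod_cast hn
  have hmod : ∀ i < k', x (i₀ + i) - (β * n - 1) = x (i₀ + i) % n + 1 := fun i hi ↦ by
    rw [Int.emod_def, hβ i hi]
    ring
  refine hχ _ (fun i hi ↦ ?_) (fun i hi j hj ↦ ?_) (hx.shift hi₀ (β * n - 1)).isAPeps
  · have hnonneg := Int.emod_nonneg (x (i₀ + i)) hn'.ne'
    have hlt := Int.emod_lt_of_pos (x (i₀ + i)) hn'
    rw [hmod i hi, mem_Icc]
    omega
  · have hcol := hmono (i₀ + i) (by omega) (i₀ + j) (by omega)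
    simp only [blockColouring, hβ i hi, hβ j hj] at hcol
    simpa only [hmod i hi, hmod j hj] using Fin.succAbove_right_injective hcol

end BlockColouring

section ShortStep

lemma exists_le_apply_eq_of_le_add_one {B : ℕ → ℤ} {n : ℕ} (hB : ∀ i < n, B (i + 1) ≤ B i + 1)
    {b : ℤ} (h₀ : B 0 ≤ b) (hb : b ≤ B n) : ∃ i ≤ n, B i = b := by
  induction n with
  | zero => exact ⟨0, le_rfl, by omega⟩
  | succ n ih =>
    by_cases hbn : b ≤ B n
    · obtain ⟨i, hi, rfl⟩ := ih (fun i hi ↦ hB i (by omega)) hbn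
      exact ⟨i, by omega, rfl⟩
    · exact ⟨n + 1, le_rfl, by have := hB n (by omega); omega⟩

lemma exists_forall_apply_add_eq {B : ℕ → ℤ} {k k' L : ℕ} (hB : MonotoneOn B (Set.Iio k))
    (hk : L * k' < k) (hspan : B (L * k') < B 0 + L) :
    ∃ i₀, i₀ + k' < k ∧ ∀ i < k', B (i₀ + i) = B i₀ := by
  by_cases hrun : ∃ t < L, B ((t + 1) * k') = B (t * k')
  · obtain ⟨t, ht, heq⟩ := hrun
    have hlt : (t + 1) * k' < k := (Nat.mul_le_mul_right k' ht).trans_lt hk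
    rw [add_one_mul] at hlt heq
    refine ⟨t * k', hlt, fun i hi ↦ le_antisymm ?_ ?_⟩
    · exact (hB (by simp; omega) (by simpa) (by omega)).trans_eq heq
    · exact hB (by simp; omega) (by simp; omega) (by omega)
  · push Not at hrun
    have hgrow : ∀ t ≤ L, B 0 + t ≤ B (t * k') := fun t ht ↦ by
      induction t with
      | zero => simp
      | succ t ih =>
        have hlt : (t + 1) * k' < k := (Nat.mul_le_mul_right k' ht).trans_lt hk
        have hle : t * k' ≤ (t + 1) * k' := Nat.mul_le_mul_right k' (by omega)
        have hstep := hB (by simp; omega) (by simpa) hle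
        have hne := hrun t ht
        have := ih (by omega)
        push_cast
        omega
    exact absurd (hgrow L le_rfl) (by omega)

variable {ε : ℝ} {k k' r n L : ℕ} {m : ℤ → Fin (r + 1)} {χ : ℤ → Fin r} {x : ℕ → ℤ} {a d : ℝ}

lemma IsAPepsWith.ediv_add_one_le (hx : IsAPepsWith ε k x a d) (hε : ε ≤ 1 / 4) (hn : 0 < n)
    (hd : d ≤ n / 2) {i : ℕ} (hi : i + 1 < k) : x (i + 1) / n ≤ x i / n + 1 := by
  have hstep := (abs_lt.1 (hx.abs_sub_sub_lt (i := i) (by omega) hi)).2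
  push_cast at hstep
  have hεd : ε * d ≤ 1 / 4 * d := mul_le_mul_of_nonneg_right hε hx.1.le
  have hreal : (x (i + 1) : ℝ) ≤ x i + n := by linarith [hx.1]
  have hle : x (i + 1) ≤ x i + 1 * n := by
    rw [one_mul]
    exact_mod_cast hreal
  rw [← Int.add_mul_ediv_right _ _ (by omega : (n : ℤ) ≠ 0)]
  exact Int.ediv_le_ediv (by omega) hle

/- A slow progression visits every block between its ends; as it never visits a block that omits its
own colour, it stays within few blocks, hence spends `k'` consecutive terms in one of them. -/
lemma APepsFree.half_lt_of_monochromatic (hχ : APepsFree ε k' n χ) (hε : ε ≤ 1 / 4) (hn : 0 < n)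
    (hk : L * k' < k) (hm : ∀ (y : ℤ) c, ∃ b ∈ Set.Ico y (y + L), m b = c)
    (hx : IsAPepsWith ε k x a d)
    (hmono : ∀ i < k, ∀ j < k, blockColouring n m χ (x i) = blockColouring n m χ (x j)) :
    n / 2 < d := by
  by_contra! hd
  set B : ℕ → ℤ := fun i ↦ x i / n
  have hB : MonotoneOn B (Set.Iio k) := fun i hi j hj hij ↦
    Int.ediv_le_ediv (by omega) ((hx.strictMonoOn (by linarith)).monotoneOn hi hj hij)
  have hspan : B (L * k') < B 0 + L := by
    by_contra! hfar
    obtain ⟨b, hb, hbc⟩ := hm (B 0) (blockColouring n m χ (x 0))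
    obtain ⟨i, hi, rfl⟩ := exists_le_apply_eq_of_le_add_one (B := B)
      (fun i hi ↦ hx.ediv_add_one_le hε hn hd (by omega)) hb.1 (hb.2.le.trans hfar)
    rw [hmono 0 (by omega) i (by omega)] at hbc
    exact (m (B i)).succAbove_ne _ hbc.symm
  obtain ⟨i₀, hi₀, hrun⟩ := exists_forall_apply_add_eq hB hk hspan
  exact hχ.not_forall_ediv_eq hn hx hmono hi₀.le (B i₀) hrun

end ShortStep

section LongStep

/-- A block `b` such that the `i`-th term of an `AP(ε)` which starts at `u` and has mean gap `D`
lies in block `b` or `b + 1`, when blocks have length `n ≥ 16 * ε * D`. -/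
noncomputable def expectedBlock (ε : ℝ) (n : ℕ) (u : ℤ) (D : ℝ) (i : ℕ) : ℤ :=
  ⌊(u + i * D - 8 * ε * D) / n⌋

variable {ε : ℝ} {n : ℕ} {u : ℤ} {D : ℝ}

lemma ediv_eq_expectedBlock_or {i : ℕ} {y : ℤ} (hn : 0 < n) (hD : 16 * ε * D ≤ n)
    (hy : |(y : ℝ) - (u + i * D)| < 8 * ε * D) :
    y / n = expectedBlock ε n u D i ∨ y / n = expectedBlock ε n u D i + 1 := by
  have hn' : (0 : ℝ) < n := by exact_mod_cast hn
  have hy := abs_lt.1 hy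
  set b := expectedBlock ε n u D i
  have hfloor : (b : ℝ) * n ≤ u + i * D - 8 * ε * D := (le_div_iff₀ hn').1 (Int.floor_le _)
  have hfloor' : u + i * D - 8 * ε * D < ((b : ℝ) + 1) * n :=
    (div_lt_iff₀ hn').1 (Int.lt_floor_add_one _)
  have hlower : b ≤ y / n := by
    rw [Int.le_ediv_iff_mul_le (by omega)]
    have : (b : ℝ) * n ≤ y := by linarith
    exact_mod_cast this
  have hupper : y / n < b + 2 := by
    rw [Int.ediv_lt_iff_lt_mul (by omega)]
    have : (y : ℝ) < (b + 2) * n := by linarith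
    exact_mod_cast this
  omega

lemma expectedBlock_mul_add_le {q C t t' : ℕ} (hn : 0 < n) (hqC : q * n ≤ C * D)
    (htt' : t < t') :
    expectedBlock ε n u D (t * C) + q ≤ expectedBlock ε n u D (t' * C) := by
  have hn' : (0 : ℝ) < n := by exact_mod_cast hn
  have hCD : 0 ≤ C * D := le_trans (by positivity) hqC
  have ht : (t : ℝ) + 1 ≤ t' := by exact_mod_cast htt'
  rw [expectedBlock, expectedBlock, ← Int.floor_add_natCast]
  gcongr
  rw [div_add' _ _ _ hn'.ne']
  gcongr
  push_cast
  nlinarith [mul_le_mul_of_nonneg_right ht hCD]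

lemma sixteen_mul_mul_meanGap_le {k N : ℕ} {v : ℤ} (hε : 0 ≤ ε) (hk : 2 ≤ k)
    (hu : u ∈ Icc (1 : ℤ) N) (hv : v ∈ Icc (1 : ℤ) N) (hN : 32 * ε * N ≤ k * n) :
    16 * ε * meanGap k u v ≤ n := by
  have hk' : (2 : ℝ) ≤ k := by exact_mod_cast hk
  have hu1 : (1 : ℝ) ≤ u := by exact_mod_cast (mem_Icc.1 hu).1
  have hvN : (v : ℝ) ≤ N := by exact_mod_cast (mem_Icc.1 hv).2
  rw [meanGap, mul_div_assoc', div_le_iff₀ (by linarith)]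
  have hspan : 16 * ε * (v - u) ≤ 16 * ε * N := by
    gcongr
    linarith
  nlinarith

variable {k r : ℕ} {m : ℤ → Fin (r + 1)} {χ : ℤ → Fin r} {x : ℕ → ℤ}

lemma exists_blockColouring_ne_of_expectedBlock {T C : ℕ} (hn : 0 < n)
    (hTC : T * C ≤ k) (hC : 0 < C) (hD : 16 * ε * D ≤ n)
    (hx : ∀ i < k, |(x i : ℝ) - (u + i * D)| < 8 * ε * D)
    (hm : ∀ c, ∃ t < T, m (expectedBlock ε n u D (t * C)) = c ∧
      m (expectedBlock ε n u D (t * C) + 1) = c) :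
    ∃ i < k, blockColouring n m χ (x i) ≠ blockColouring n m χ (x 0) := by
  obtain ⟨t, ht, hfirst, hsecond⟩ := hm (blockColouring n m χ (x 0))
  have hi : t * C < k := (Nat.mul_lt_mul_of_pos_right ht hC).trans_le hTC
  refine ⟨t * C, hi, fun heq ↦ (m (x (t * C) / n)).succAbove_ne (χ (x (t * C) % n + 1)) ?_⟩
  refine heq.trans ?_
  rcases ediv_eq_expectedBlock_or hn hD (hx _ hi) with hb | hb
  · rw [hb, hfirst]
  · rw [hb, hsecond]

end LongStep

section LowerBound

lemma apepsFree_blockColouring {ε : ℝ} {k k' n N r L T C : ℕ} {m : ℤ → Fin (r + 1)}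
    {χ : ℤ → Fin r} (hε₀ : 0 ≤ ε) (hε : ε ≤ 1 / 4) (hk : 2 ≤ k) (hn : 0 < n) (hLk : L * k' < k)
    (hTC : T * C ≤ k) (hC : 0 < C) (hN : 32 * ε * N ≤ k * n) (hχ : APepsFree ε k' n χ)
    (hm : ∀ (y : ℤ) c, ∃ b ∈ Set.Ico y (y + L), m b = c)
    (hm' : ∀ u ∈ Icc (1 : ℤ) N, ∀ v ∈ Icc (1 : ℤ) N, (n : ℝ) / 4 ≤ meanGap k u v →
      ∀ c, ∃ t < T, m (expectedBlock ε n u (meanGap k u v) (t * C)) = c ∧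
        m (expectedBlock ε n u (meanGap k u v) (t * C) + 1) = c) :
    APepsFree ε k N (blockColouring n m χ) := by
  rintro x hmem hmono ⟨a, d, hx : IsAPepsWith ε k x a d⟩
  have hd : n / 2 < d := hχ.half_lt_of_monochromatic hε hn hLk hm hx hmono
  have hu := hmem 0 (by omega)
  have hv := hmem (k - 1) (by omega)
  have hD : (n : ℝ) / 4 ≤ meanGap k (x 0) (x (k - 1)) := by
    linarith [hx.half_le_meanGap hk hε]
  obtain ⟨i, hi, hne⟩ := exists_blockColouring_ne_of_expectedBlock (χ := χ) hn hTC hC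
    (sixteen_mul_mul_meanGap_le hε₀ hk hu hv hN)
    (fun i hi ↦ hx.abs_sub_add_mul_meanGap_lt hk hε₀ hε hi) (hm' _ hu _ hv hD)
  exact hne (hmono i hi 0 (by omega))

lemma exists_apepsFree_succ (r : ℕ) :
    ∃ q ∈ Set.Ico (0 : ℝ) 1, ∀ {ε : ℝ} {k k' n N : ℕ} {χ : ℤ → Fin r}, 0 ≤ ε → ε ≤ 1 / 4 →
      2 ≤ k → 0 < n → 2 * (r + 2) * k' < k → 32 * ε * N ≤ k * n →
      (N : ℝ) ^ 2 * (r + 1) * q ^ (k / (4 * (r + 3))) < 1 → APepsFree ε k' n χ →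
      ∃ c : ℤ → Fin (r + 1), APepsFree ε k N c := by
  classical
  obtain ⟨q, hq, hmissing⟩ := exists_map_attaining_and_repeating (Fin (r + 1))
  refine ⟨q, hq, fun {ε k k' n N χ} hε₀ hε hk hn hLk hN hunion hχ ↦ ?_⟩
  set C := 4 * (r + 3) with hC
  set P := {w ∈ Icc (1 : ℤ) N ×ˢ Icc (1 : ℤ) N | (n : ℝ) / 4 ≤ meanGap k w.1 w.2}
  set E := P.image fun w t ↦ expectedBlock ε n w.1 (meanGap k w.1 w.2) (t * C) with hE
  have hsep : ∀ b ∈ E, ∀ t t', t < t' → b t + (Fintype.card (Fin (r + 1)) + 2) ≤ b t' := by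
    simp only [hE, mem_image, forall_exists_index, and_imp, Fintype.card_fin]
    rintro b w hw rfl t t' htt'
    have hgap := (mem_filter.1 hw).2
    have hstep : ((r + 3 : ℕ) : ℝ) * n ≤ C * meanGap k w.1 w.2 := by
      rw [hC]
      push_cast
      nlinarith
    exact_mod_cast expectedBlock_mul_add_le hn hstep htt'
  have hcard : (#E : ℝ) ≤ (N : ℝ) ^ 2 := by
    have : #E ≤ N * N := card_image_le.trans <| (card_filter_le _ _).trans_eq <| by simp
    rw [sq]
    exact_mod_cast this
  have hlt : #E * Fintype.card (Fin (r + 1)) * q ^ (k / C) < 1 := by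
    refine lt_of_le_of_lt ?_ hunion
    have hq₀ := hq.1
    rw [Fintype.card_fin]
    push_cast
    gcongr
  obtain ⟨m, hm, hrepeat⟩ := hmissing E (k / C) hsep hlt
  have hwindow (y : ℤ) c : ∃ b ∈ Set.Ico y (y + ↑(2 * (r + 2))), m b = c := by
    convert hm y c using 5
    rw [Fintype.card_fin]
    push_cast
    ring
  refine ⟨blockColouring n m χ, apepsFree_blockColouring hε₀ hε hk hn hLk (Nat.div_mul_le_self k C)
    (by omega) hN hχ hwindow fun u hu v hv hgap ↦ ?_⟩
  exact hrepeat (fun t ↦ expectedBlock ε n u (meanGap k u v) (t * C))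
    (mem_image.2 ⟨(u, v), mem_filter.2 ⟨mem_product.2 ⟨hu, hv⟩, hgap⟩, rfl⟩)

lemma eventually_pow_mul_mul_pow_div_lt_one {q : ℝ} (hq : q ∈ Set.Ico (0 : ℝ) 1) {M : ℝ}
    (hM : 0 ≤ M) (e : ℕ) {C : ℕ} (hC : C ≠ 0) :
    ∀ᶠ k : ℕ in atTop, (k : ℝ) ^ e * M * q ^ (k / C) < 1 := by
  have hlim : Tendsto (fun t : ℕ ↦ (2 * C : ℝ) ^ e * M * ((t : ℝ) ^ e * q ^ t)) atTop (𝓝 0) := by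
    simpa using (tendsto_pow_const_mul_const_pow_of_abs_lt_one e
      (by rw [abs_of_nonneg hq.1]; exact hq.2)).const_mul ((2 * C : ℝ) ^ e * M)
  have hlt := (hlim.comp (Nat.tendsto_div_const_atTop hC)).eventually_lt_const one_pos
  filter_upwards [hlt, eventually_ge_atTop C] with k hk hCk
  have hk_le : k ≤ 2 * C * (k / C) := by
    have hmod := Nat.div_add_mod k C
    have hmod_lt := Nat.mod_lt k (Nat.pos_of_ne_zero hC)
    have hone : C * 1 ≤ C * (k / C) := by
      gcongr
      exact (Nat.one_le_div_iff (by omega)).2 hCk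
    rw [mul_assoc]
    omega
  have hk_le' : (k : ℝ) ≤ 2 * C * ((k / C : ℕ) : ℝ) := by exact_mod_cast hk_le
  have hq₀ := hq.1
  calc (k : ℝ) ^ e * M * q ^ (k / C)
      ≤ (2 * C * ((k / C : ℕ) : ℝ)) ^ e * M * q ^ (k / C) := by gcongr
    _ = (2 * C : ℝ) ^ e * M * (((k / C : ℕ) : ℝ) ^ e * q ^ (k / C)) := by
        rw [mul_pow]
        ring
    _ < 1 := hk

lemma mul_ceil_div_two_mul_lt {L k : ℕ} (hL : 0 < L) (hk : 2 * L ≤ k) :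
    L * ⌈(k : ℝ) / (2 * L)⌉₊ < k := by
  have : (0 : ℝ) < L := by exact_mod_cast hL
  have hk' : 2 * (L : ℝ) ≤ k := by exact_mod_cast hk
  have hceil : (⌈(k : ℝ) / (2 * L)⌉₊ : ℝ) < k / (2 * L) + 1 :=
    Nat.ceil_lt_add_one (by positivity)
  have : (L * ⌈(k : ℝ) / (2 * L)⌉₊ : ℝ) < k :=
    calc (L * ⌈(k : ℝ) / (2 * L)⌉₊ : ℝ) < L * (k / (2 * L) + 1) := by gcongr
      _ = k / 2 + L := by field_simp
      _ ≤ k := by linarith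
  exact_mod_cast this

lemma exists_block_parameters {c K ε : ℝ} {L k N r : ℕ} (hc₀ : 0 < c) (hc : c ≤ 1) (hK : 1 ≤ K)
    (hL : 0 < L) (hε₀ : 0 < ε) (hε : ε ≤ 1) (hk : 2 * L * K / c ≤ ε * k)
    (hN : N ≤ c / (64 * (2 * L) ^ (r + 1)) * k ^ (r + 2) / ε ^ (r + 1)) :
    ∃ k' n : ℕ, L * k' < k ∧ K ≤ ε * k' ∧ 0 < n ∧ (n : ℝ) ≤ c * k' ^ (r + 1) / ε ^ r ∧
      32 * ε * N ≤ k * n := by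
  have : (0 : ℝ) < L := by exact_mod_cast hL
  have hεk : 2 * L * K ≤ c * (ε * k) := (div_le_iff₀' hc₀).1 hk
  have hKL : 2 * (L : ℝ) ≤ 2 * L * K := le_mul_of_one_le_right (by positivity) hK
  have hεk₀ : 0 ≤ ε * k := by positivity
  have hεk_le : ε * k ≤ k := mul_le_of_le_one_left (by positivity) hε
  have hcεk_le : c * (ε * k) ≤ ε * k := mul_le_of_le_one_left hεk₀ hc
  set k' := ⌈(k : ℝ) / (2 * L)⌉₊
  have hk'_ge : k / (2 * L) ≤ (k' : ℝ) := Nat.le_ceil _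
  have hKk' : K ≤ c * (ε * k') := by
    have : K ≤ c * (ε * (k / (2 * L))) := by
      rw [← mul_div_assoc, ← mul_div_assoc, le_div_iff₀ (by positivity)]
      linarith
    exact this.trans (by gcongr)
  have hck'_le : c * (ε * k') ≤ c * k' := by
    gcongr
    exact mul_le_of_le_one_left (by positivity) hε
  have hk'_one : (1 : ℝ) ≤ k' := by
    linarith [mul_le_of_le_one_left (by positivity : (0 : ℝ) ≤ k') hc]
  set Y : ℝ := c * k' ^ (r + 1) / ε ^ r
  have hY : 1 ≤ Y := by
    have hsplit : Y = c * k' * (k' ^ r / ε ^ r) := by ring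
    rw [hsplit]
    exact one_le_mul_of_one_le_of_one_le (by linarith) (one_le_pow_div_pow hk'_one hε₀ hε r r)
  refine ⟨k', ⌊Y⌋₊, ?_, ?_, Nat.floor_pos.2 hY, Nat.floor_le (by linarith), ?_⟩
  · refine mul_ceil_div_two_mul_lt hL ?_
    have : (2 * L : ℝ) ≤ k := by linarith
    exact_mod_cast this
  · exact hKk'.trans (mul_le_of_le_one_left (by positivity) hc)
  · calc 32 * ε * N
        ≤ 32 * ε * (c / (64 * (2 * L) ^ (r + 1)) * k ^ (r + 2) / ε ^ (r + 1)) := by gcongr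
      _ = k * (c * (k / (2 * L)) ^ (r + 1) / ε ^ r / 2) := by
          rw [div_pow]
          field_simp
          ring
      _ ≤ k * (c * k' ^ (r + 1) / ε ^ r / 2) := by gcongr
      _ ≤ k * ⌊Y⌋₊ := by
          gcongr
          exact (Nat.div_two_lt_floor hY).le

lemma natCast_le_pow_of_le_pow_div_pow {ε : ℝ} {k N a b : ℕ} (hε₀ : 0 < ε) (hεk : 1 ≤ ε * k)
    (hN : N ≤ (k : ℝ) ^ a / ε ^ b) : (N : ℝ) ≤ k ^ (a + b) := by
  calc (N : ℝ) ≤ (k : ℝ) ^ a / ε ^ b := hN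
    _ ≤ (k : ℝ) ^ a / ε ^ b * (ε * k) ^ b :=
        le_mul_of_one_le_right (by positivity) (one_le_pow₀ hεk)
    _ = k ^ (a + b) := by
        rw [mul_pow, pow_add]
        field_simp

lemma exists_apepsFree_succ_of_le_pow (r e : ℕ) :
    ∃ k₀ : ℕ, ∀ {ε : ℝ} {k k' n N : ℕ} {χ : ℤ → Fin r}, 0 ≤ ε → ε ≤ 1 / 4 → k₀ ≤ k → 0 < n →
      2 * (r + 2) * k' < k → 32 * ε * N ≤ k * n → (N : ℝ) ≤ k ^ e → APepsFree ε k' n χ →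
      ∃ c : ℤ → Fin (r + 1), APepsFree ε k N c := by
  obtain ⟨q, hq, hstep⟩ := exists_apepsFree_succ r
  have hq₀ := hq.1
  obtain ⟨k₀, hk₀⟩ := eventually_atTop.1 <| eventually_pow_mul_mul_pow_div_lt_one hq
    (M := r + 1) (by positivity) (e * 2) (C := 4 * (r + 3)) (by omega)
  refine ⟨max 2 k₀, fun {ε k k' n N χ} hε₀ hε hk hn hLk hNn hNk ↦
    hstep hε₀ hε ((le_max_left _ _).trans hk) hn hLk hNn ?_⟩
  refine lt_of_le_of_lt ?_ (hk₀ k ((le_max_right _ _).trans hk))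
  rw [pow_mul]
  gcongr

lemma exists_forall_exists_apepsFree (r : ℕ) :
    ∃ c K : ℝ, 0 < c ∧ c ≤ 1 ∧ 1 ≤ K ∧ ∀ {ε : ℝ} {k N : ℕ}, 0 < ε → ε ≤ 1 / 4 → K ≤ ε * k →
      N ≤ c * k ^ (r + 1) / ε ^ r → ∃ χ : ℤ → Fin (r + 1), APepsFree ε k N χ := by
  induction r with
  | zero =>
    refine ⟨1 / 2, 1, by norm_num, by norm_num, le_rfl, fun {ε k N} hε₀ hε hk hN ↦
      ⟨0, apepsFree_of_lt (by linarith) ?_ 0⟩⟩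
    have hk₀ : (0 : ℝ) < k := pos_of_mul_pos_right (by linarith) hε₀.le
    have : (N : ℝ) < k := by
      rw [zero_add, pow_one, pow_zero, div_one] at hN
      linarith
    exact_mod_cast this
  | succ r ih =>
    obtain ⟨c, K, hc₀, hc, hK, hfree⟩ := ih
    obtain ⟨k₀, hstep⟩ := exists_apepsFree_succ_of_le_pow (r + 1) (r + 2 + (r + 1))
    set L := 2 * (r + 1 + 2) with hL
    have hL1 : (1 : ℝ) ≤ 2 * L := by
      rw [hL]
      push_cast
      linarith
    have hLK : 1 ≤ 2 * L * K / c := by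
      rw [one_le_div₀ hc₀]
      exact hc.trans (one_le_mul_of_one_le_of_one_le hL1 hK)
    have hc' : c / (64 * (2 * L) ^ (r + 1)) ≤ 1 := div_le_one_of_le₀
      (hc.trans (one_le_mul_of_one_le_of_one_le (by norm_num) (one_le_pow₀ hL1))) (by positivity)
    refine ⟨c / (64 * (2 * L) ^ (r + 1)), max (2 * L * K / c) k₀, by positivity, hc',
      le_max_of_le_left hLK, fun {ε k N} hε₀ hε hk hN ↦ ?_⟩
    have hkL := (le_max_left _ _).trans hk
    have hkk₀ : (k₀ : ℝ) ≤ k := ((le_max_right _ _).trans hk).trans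
      (mul_le_of_le_one_left (by positivity) (by linarith))
    obtain ⟨k', n, hLk', hKk', hn, hnk', hNn⟩ :=
      exists_block_parameters hc₀ hc hK (by omega) hε₀ (by linarith) hkL hN
    obtain ⟨χ, hχ⟩ := hfree hε₀ hε hKk' hnk'
    refine hstep hε₀.le hε (by exact_mod_cast hkk₀) hn hLk' hNn
      (natCast_le_pow_of_le_pow_div_pow hε₀ (hLK.trans hkL) (hN.trans ?_)) hχ
    gcongr
    exact mul_le_of_le_one_left (by positivity) hc'

lemma le_weps_of_forall_not_hasMonoAPeps {ε X : ℝ} {k r : ℕ}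
    (hfin : ∃ N, 0 < N ∧ HasMonoAPeps ε k r N) (h : ∀ N : ℕ, N ≤ X → ¬ HasMonoAPeps ε k r N) :
    X ≤ Weps ε k r := by
  by_contra! hlt
  exact h _ hlt.le (Nat.sInf_mem hfin).2

end LowerBound

lemma exists_one_le_log_and_forall_le_mul {r : ℕ} (hr : 1 ≤ r) (K : ℝ) :
    ∃ ε₀ : ℝ, 0 < ε₀ ∧ ε₀ ≤ 1 / 4 ∧ ∀ ε : ℝ, 0 < ε → ε ≤ ε₀ → 1 ≤ Real.log (1 / ε) ∧
      ∀ k : ℕ, (k : ℝ) ≥ 2 ^ r * (Nat.factorial r : ℝ) * ε⁻¹ * (Real.log (1 / (5 * ε))) ^ r →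
        K ≤ ε * k := by
  set M := max 1 K
  have hM : 1 ≤ M := le_max_left 1 K
  refine ⟨Real.exp (-M) / 5, by positivity, ?_, fun ε hε₀ hε ↦ ?_⟩
  · have : Real.exp (-M) ≤ 1 := Real.exp_le_one_iff.2 (by linarith)
    linarith
  have hlog : M ≤ Real.log (1 / (5 * ε)) := by
    rw [one_div, Real.log_inv, le_neg]
    exact (Real.log_le_iff_le_exp (by positivity)).2 (by linarith)
  refine ⟨hM.trans (hlog.trans ?_), fun k hk ↦ ?_⟩
  · gcongr
    linarith
  · have hfactor : (1 : ℝ) ≤ 2 ^ r * (Nat.factorial r : ℝ) :=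
      one_le_mul_of_one_le_of_one_le (one_le_pow₀ one_le_two) (by exact_mod_cast r.factorial_pos)
    calc K ≤ M := le_max_right 1 K
      _ ≤ M ^ r := le_self_pow₀ hM (by omega)
      _ ≤ Real.log (1 / (5 * ε)) ^ r := by gcongr
      _ ≤ 2 ^ r * (Nat.factorial r : ℝ) * Real.log (1 / (5 * ε)) ^ r :=
          le_mul_of_one_le_left (pow_nonneg (by linarith) r) hfactor
      _ = ε * (2 ^ r * (Nat.factorial r : ℝ) * ε⁻¹ * Real.log (1 / (5 * ε)) ^ r) := by
          field_simp
      _ ≤ ε * k := by gcongr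

theorem approximate_van_der_waerden_bounds_general (r : ℕ) (hr : 1 ≤ r) :
    ∃ c K : ℝ, 0 < c ∧ ∀ ε : ℝ, 0 < ε → ε ≤ 1 / 4 → ∀ k : ℕ, K ≤ ε * k →
      c * (k : ℝ) ^ r / ε ^ (r - 1) ≤ Weps ε k r ∧
        (Weps ε k r : ℝ) ≤ 2 * (k : ℝ) ^ r / ε ^ (r - 1) := by
  obtain ⟨r, rfl⟩ := Nat.exists_eq_add_of_le' hr
  obtain ⟨c, K, hc₀, -, hK, hfree⟩ := exists_forall_exists_apepsFree r
  refine ⟨c, K, hc₀, fun ε hε₀ hε k hk ↦ ?_⟩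
  have hk₀ : k ≠ 0 := by
    rintro rfl
    norm_num at hk
    linarith
  set X : ℝ := (k : ℝ) ^ (r + 1) / ε ^ r with hX
  have hX1 : 1 ≤ X := one_le_pow_div_pow (by exact_mod_cast Nat.one_le_iff_ne_zero.2 hk₀) hε₀
    (by linarith) _ _
  have hmono : 0 < ⌈X⌉₊ ∧ HasMonoAPeps ε k (r + 1) ⌈X⌉₊ :=
    ⟨Nat.ceil_pos.2 (by linarith), hasMonoAPeps_of_le hε₀ (by linarith) hk₀ (Nat.le_ceil X)⟩
  constructor
  · refine le_weps_of_forall_not_hasMonoAPeps ⟨_, hmono⟩ fun N hN ↦ ?_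
    obtain ⟨χ, hχ⟩ := hfree hε₀ hε hk hN
    exact hχ.not_hasMonoAPeps
  · calc (Weps ε k (r + 1) : ℝ) ≤ ⌈X⌉₊ := by exact_mod_cast Nat.sInf_le hmono
      _ ≤ 2 * X := by linarith [Nat.ceil_lt_add_one (by linarith : 0 ≤ X)]
      _ = 2 * (k : ℝ) ^ (r + 1) / ε ^ (r + 1 - 1) := by rw [hX, mul_div_assoc, Nat.add_sub_cancel]

theorem approximate_van_der_waerden_bounds (r : ℕ) (hr : 1 ≤ r) :
    ∃ ε₀ : ℝ, 0 < ε₀ ∧ ∃ c : ℝ, 0 < c ∧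
      ∀ ε : ℝ, 0 < ε → ε ≤ ε₀ →
        ∀ k : ℕ,
          (k : ℝ) ≥ 2 ^ r * (Nat.factorial r : ℝ) * ε⁻¹ * (Real.log (1 / (5 * ε))) ^ r →
          c * (k : ℝ) ^ r /
              (ε ^ (r - 1) * (Real.log (1 / ε)) ^ (Nat.choose (r + 1) 2 - 1)) ≤
            (Weps ε k r : ℝ) ∧
          (Weps ε k r : ℝ) ≤ 2 * (k : ℝ) ^ r / ε ^ (r - 1) := by
  obtain ⟨c, K, hc, hbounds⟩ := approximate_van_der_waerden_bounds_general r hr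
  obtain ⟨ε₀, hε₀, hε₀_le, hthreshold⟩ := exists_one_le_log_and_forall_le_mul hr K
  refine ⟨ε₀, hε₀, c, hc, fun ε hε hεε₀ k hk ↦ ?_⟩
  obtain ⟨hlog, hKk⟩ := hthreshold ε hε hεε₀
  obtain ⟨hlower, hupper⟩ := hbounds ε hε (hεε₀.trans hε₀_le) k (hKk k hk)
  refine ⟨le_trans ?_ hlower, hupper⟩
  gcongr
  exact le_mul_of_one_le_right (by positivity) (one_le_pow₀ hlog)
end

section
/- Let r ≥ 1 and k ≥ 1 be integers, let 0 < ε < 1, and set t = ⌈k/ε⌉. Let B_r = { b_0 + t·b_1 + … + t^{r-1}·b_{r-1} : (b_0,…,b_{r-1}) ∈ {0,1,…,k−1}^r }. Then every coloring of B_r with r colors contains a monochromatic AP_k(ε). -/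
/-!
Split `B_{n+1}` by its leading digit `i < k` into the translates `t ^ n * i + B_n`, and fix a
colour. If every translate contains a point of that colour, one such point from each translate
gives the progression, with difference `t ^ n`: a translate has diameter less than `2 * ε * t ^ n`,
and one takes `a` to be the midpoint of the interval spanned by the translate with `i = 0`.
Otherwise some translate misses the colour, and one concludes by induction on the number of
colours.
-/

theorem mul_geom_sum_lt {R : Type*} [CommRing R] [LinearOrder R] [IsStrictOrderedRing R]
    {a q t : R} (ha : 0 < a) (ht : 0 ≤ t) (hq : q ≤ a * (t - 1)) (n : ℕ) :
    q * ∑ j ∈ Finset.range n, t ^ j < a * t ^ n :=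
  calc
    q * ∑ j ∈ Finset.range n, t ^ j ≤ a * (t - 1) * ∑ j ∈ Finset.range n, t ^ j :=
      mul_le_mul_of_nonneg_right hq (Finset.sum_nonneg fun j _ => pow_nonneg ht j)
    _ = a * (t ^ n - 1) := by rw [mul_assoc, mul_geom_sum]
    _ < a * t ^ n := mul_lt_mul_of_pos_left (sub_one_lt _) ha

theorem sub_one_le_mul_ceil_div_sub_one {ε u : ℝ} (hε : 0 < ε) (hε1 : ε ≤ 1) (hu : 1 ≤ u) :
    u - 1 ≤ 2 * ε * (⌈u / ε⌉ - 1) := by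
  have hceil : u ≤ ⌈u / ε⌉ * ε := (div_le_iff₀ hε).1 (Int.le_ceil _)
  linarith

namespace IsAPeps

variable {ε : ℝ} {k : ℕ} {x : ℕ → ℤ}

theorem const_add (h : IsAPeps ε k x) (m : ℤ) : IsAPeps ε k fun i => m + x i := by
  obtain ⟨a, d, hd, hx⟩ := h
  refine ⟨m + a, d, hd, fun i hi => ?_⟩
  convert hx i hi using 2
  push_cast
  ring

theorem of_mem_Icc {a d w : ℝ} (hd : 0 < d) (hw : w < 2 * ε * d)
    (hx : ∀ i < k, (x i : ℝ) ∈ Set.Icc (a + i * d) (a + i * d + w)) : IsAPeps ε k x := by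
  refine ⟨a + w / 2, d, hd, fun i hi => ?_⟩
  obtain ⟨hlower, hupper⟩ := hx i hi
  rw [abs_lt]
  constructor <;> linarith

end IsAPeps

/-- The set `B_n` of all sums `b₀ + t b₁ + ⋯ + t ^ (n - 1) bₙ₋₁` with digits `bⱼ < k`. The base `t`
is arbitrary, so different digit strings may represent the same integer. -/
def blowup (t : ℤ) (k n : ℕ) : Set ℤ :=
  {y | ∃ b : Fin n → ℕ, (∀ j, b j < k) ∧ y = ∑ j : Fin n, t ^ (j : ℕ) * (b j : ℤ)}

section Blowup

variable {t : ℤ} {k n : ℕ}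

theorem zero_mem_blowup (hk : 0 < k) : 0 ∈ blowup t k n :=
  ⟨fun _ => 0, fun _ => hk, by simp⟩

theorem mul_add_mem_blowup_succ {i : ℕ} (hi : i < k) {y : ℤ} (hy : y ∈ blowup t k n) :
    t ^ n * i + y ∈ blowup t k (n + 1) := by
  obtain ⟨b, hb, rfl⟩ := hy
  refine ⟨Fin.snoc b i, Fin.lastCases (by simpa using hi) (by simpa using hb), ?_⟩
  simp [Fin.sum_univ_castSucc, add_comm]

theorem blowup_subset_Icc (ht : 0 ≤ t) :
    blowup t k n ⊆ Set.Icc 0 ((k - 1) * ∑ j ∈ Finset.range n, t ^ j) := by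
  rintro _ ⟨b, hb, rfl⟩
  refine ⟨Finset.sum_nonneg fun j _ => by positivity, ?_⟩
  rw [mul_comm, Finset.sum_range, Finset.sum_mul]
  have hdigit (j : Fin n) : (b j : ℤ) ≤ k - 1 := by have := hb j; omega
  gcongr
  exact hdigit _

theorem isAPeps_mul_add_of_mem_blowup {ε : ℝ} (hε : 0 < ε) (ht : 0 < t)
    (hkt : (k : ℝ) - 1 ≤ 2 * ε * (t - 1)) {y : ℕ → ℤ} (hy : ∀ i < k, y i ∈ blowup t k n) :
    IsAPeps ε k fun i => t ^ n * i + y i := by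
  have ht' : (0 : ℝ) < t := Int.cast_pos.2 ht
  refine .of_mem_Icc (a := 0) (pow_pos ht' n)
    (mul_geom_sum_lt (by positivity) ht'.le hkt n) fun i hi => ?_
  obtain ⟨hlower, hupper⟩ := blowup_subset_Icc ht.le (hy i hi)
  have hlower' : (0 : ℝ) ≤ y i := Int.cast_nonneg hlower
  have hupper' : (y i : ℝ) ≤ (k - 1) * ∑ j ∈ Finset.range n, (t : ℝ) ^ j := mod_cast hupper
  push_cast
  constructor <;> linarith

end Blowup

theorem blowup_coloring_has_mono_APeps_general {α : Type*} {r k : ℕ} (hk : 0 < k)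
    {ε : ℝ} (hε : 0 < ε) {t : ℤ} (hkt : (k : ℝ) - 1 ≤ 2 * ε * (t - 1))
    {S : Finset α} (hS : S.card ≤ r) {c : ℤ → α} (hc : ∀ y ∈ blowup t k r, c y ∈ S) :
    ∃ x : ℕ → ℤ, (∀ i < k, x i ∈ blowup t k r) ∧
      (∀ i < k, ∀ j < k, c (x i) = c (x j)) ∧ IsAPeps ε k x := by
  classical
  have ht : 0 < t := by
    have hk1 : (0 : ℝ) ≤ k - 1 := sub_nonneg.2 (Nat.one_le_cast.2 hk)
    have ht1 : (0 : ℝ) ≤ t - 1 := nonneg_of_mul_nonneg_right (hk1.trans hkt) (by positivity)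
    exact_mod_cast zero_lt_one.trans_le (sub_nonneg.1 ht1)
  induction r generalizing S c with
  | zero => simpa [Finset.card_eq_zero.1 (Nat.le_zero.1 hS)] using hc 0 (zero_mem_blowup hk)
  | succ n ih =>
    have hq : c 0 ∈ S := hc 0 (zero_mem_blowup hk)
    by_cases hall : ∀ i < k, ∃ y ∈ blowup t k n, c (t ^ n * i + y) = c 0
    · choose! y hy hyc using hall
      exact ⟨fun i => t ^ n * i + y i, fun i hi => mul_add_mem_blowup_succ hi (hy i hi),
        fun i hi j hj => (hyc i hi).trans (hyc j hj).symm,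
        isAPeps_mul_add_of_mem_blowup hε ht hkt hy⟩
    · push Not at hall
      obtain ⟨i, hi, hmiss⟩ := hall
      have hcard : (S.erase (c 0)).card ≤ n := by
        rw [Finset.card_erase_of_mem hq]
        omega
      obtain ⟨x, hx, hmono, hAP⟩ := ih (c := fun y => c (t ^ n * i + y)) hcard fun y hy =>
        Finset.mem_erase.2 ⟨hmiss y hy, hc _ (mul_add_mem_blowup_succ hi hy)⟩
      exact ⟨fun j => t ^ n * i + x j, fun j hj => mul_add_mem_blowup_succ hi (hx j hj), hmono,
        hAP.const_add _⟩

theorem blowup_coloring_has_mono_APeps (r k : ℕ) (hr : 1 ≤ r) (hk : 1 ≤ k)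
    (ε : ℝ) (hε : 0 < ε) (hε1 : ε < 1) (t : ℤ) (ht : t = ⌈(k : ℝ) / ε⌉)
    (c : ℤ → Fin r) :
    ∃ x : ℕ → ℤ,
      (∀ i < k, ∃ b : Fin r → ℕ, (∀ j, b j ≤ k - 1) ∧
        x i = ∑ j : Fin r, t ^ (j : ℕ) * (b j : ℤ)) ∧
      (∀ i < k, ∀ j < k, c (x i) = c (x j)) ∧
      IsAPeps ε k x := by
  have hkt := ht ▸ sub_one_le_mul_ceil_div_sub_one hε hε1.le (Nat.one_le_cast.2 hk)
  simpa only [blowup, Set.mem_ofPred_eq, Nat.lt_iff_le_pred hk] using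
    blowup_coloring_has_mono_APeps_general hk hε hkt (S := Finset.univ) (by simp) (c := c) (by simp)
end

section
/- Let r ≥ 2 be an integer, let D, δ > 0 be reals with δ ≤ 1/(2r(r+1)), and let χ : ℝ → {−1,+1} be an (r−1,1;D)-alternate labeling of ℝ. Suppose a, d ∈ ℝ and ℓ is a positive integer such that d ∉ ⋃_{i∈ℤ} ⋃_{q=1}^{r} ((i/q − δ)rD, (i/q + δ)rD), and suppose there exist real numbers y_0,…,y_{ℓ−1} with |y_i − (a + i·d)| < δ·r·D and χ(y_i) = +1 for all 0 ≤ i ≤ ℓ−1 (i.e., the union of balls ⋃_{i=0}^{ℓ−1} B(a+id, δrD) has a monochromatic transversal of label +1). Then ℓ ≤ 3r/δ. -/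
/-- An `(r−1,1;D)`-alternate labeling of `ℝ`: a `{−1,+1}`-valued function `χ` for which
there exists `m ∈ ℤ` such that `χ x = +1` iff `x ∈ ⋃_{i∈ℤ} (irD+mD, (i+(r−1)/r)rD+mD]`
and `χ x = −1` iff `x ∈ ⋃_{i∈ℤ} ((i+(r−1)/r)rD+mD, (i+1)rD+mD]`. -/
def IsAltLabeling (r : ℕ) (D : ℝ) (χ : ℝ → ℤ) : Prop :=
  ∃ m : ℤ,
    (∀ x : ℝ, χ x = 1 ∨ χ x = -1) ∧
    (∀ x : ℝ, χ x = 1 ↔ ∃ i : ℤ,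
      (i : ℝ) * ((r : ℝ) * D) + (m : ℝ) * D < x ∧
      x ≤ ((i : ℝ) + ((r : ℝ) - 1) / (r : ℝ)) * ((r : ℝ) * D) + (m : ℝ) * D) ∧
    (∀ x : ℝ, χ x = -1 ↔ ∃ i : ℤ,
      ((i : ℝ) + ((r : ℝ) - 1) / (r : ℝ)) * ((r : ℝ) * D) + (m : ℝ) * D < x ∧
      x ≤ ((i : ℝ) + 1) * ((r : ℝ) * D) + (m : ℝ) * D)

/-!
Up to translation, the label `+1` occupies an arc of relative length `1 - 1/r` on the circle
`ℝ / rDℤ`, and the points `a + i d` stay in a slightly longer arc. By Dirichlet's theorem some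
multiple `q d` with `1 ≤ q ≤ r` is within `rD/(r+1)` of `rDℤ`. This is too short a step to jump over
the complement of the arc, so the subprogression of step `q d` drifts monotonically inside a single
lift of it. Each of its steps moves at least `q δ r D`, because `d` avoids the neighbourhoods of the
fractions `i/q`, so it leaves the arc after fewer than `1/(q δ)` steps.
-/

section PeriodicIoo

variable {R : Type*} [CommRing R] [LinearOrder R]

/-- The `p`-periodic extension of the open interval `(u, v)`: the preimage in `R` of an open arc
on the circle `R / pℤ`. -/
def periodicIoo (p u v : R) : Set R :=
  {x | ∃ n : ℤ, x - n * p ∈ Set.Ioo u v}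

theorem sub_intCast_mul_mem_periodicIoo {p u v x : R} (hx : x ∈ periodicIoo p u v) (j : ℤ) :
    x - j * p ∈ periodicIoo p u v := by
  obtain ⟨n, hn⟩ := hx
  refine ⟨n - j, ?_⟩
  rwa [show x - j * p - ((n - j : ℤ) : R) * p = x - n * p by push_cast; ring]

variable [IsStrictOrderedRing R]

theorem mem_periodicIoo_of_abs_sub_lt {p u v x y ρ : R} {n : ℤ}
    (hy : y - n * p ∈ Set.Icc u v) (hxy : |y - x| < ρ) :
    x ∈ periodicIoo p (u - ρ) (v + ρ) := by
  obtain ⟨hlow, hup⟩ := abs_lt.mp hxy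
  exact ⟨n, by linarith [hy.1], by linarith [hy.2]⟩

theorem eq_of_sub_intCast_mul_mem_Ioo {p u v x y : R} {m n : ℤ} (hp : 0 < p)
    (hxy : |y - x| ≤ p - (v - u)) (hx : x - m * p ∈ Set.Ioo u v) (hy : y - n * p ∈ Set.Ioo u v) :
    n = m := by
  obtain ⟨hlow, hup⟩ := abs_le.mp hxy
  have hnm : (n : R) < m + 1 := by
    refine lt_of_mul_lt_mul_right ?_ hp.le
    linarith [hx.2, hy.1]
  have hmn : (m : R) < n + 1 := by
    refine lt_of_mul_lt_mul_right ?_ hp.le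
    linarith [hx.1, hy.2]
  norm_cast at hnm hmn
  lia

theorem exists_forall_sub_intCast_mul_mem_Ioo {p u v : R} {x : ℕ → R} {N : ℕ} (hp : 0 < p)
    (hstep : ∀ k < N, |x (k + 1) - x k| ≤ p - (v - u))
    (hx : ∀ k ≤ N, x k ∈ periodicIoo p u v) :
    ∃ n : ℤ, ∀ k ≤ N, x k - n * p ∈ Set.Ioo u v := by
  obtain ⟨n, hn⟩ := hx 0 N.zero_le
  refine ⟨n, fun k hk => ?_⟩
  induction k with
  | zero => exact hn
  | succ k ih =>
    obtain ⟨n', hn'⟩ := hx (k + 1) hk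
    rwa [eq_of_sub_intCast_mul_mem_Ioo hp (hstep k hk) (ih (by lia)) hn'] at hn'

theorem mul_abs_lt_of_forall_mem_periodicIoo {p u v a b : R} {N : ℕ} (hp : 0 < p)
    (hb : |b| ≤ p - (v - u)) (h : ∀ k ≤ N, a + k * b ∈ periodicIoo p u v) :
    N * |b| < v - u := by
  have hstep (k : ℕ) : a + (k + 1 : ℕ) * b - (a + k * b) = b := by push_cast; ring
  obtain ⟨n, hn⟩ := exists_forall_sub_intCast_mul_mem_Ioo (x := fun k : ℕ => a + k * b) hp
    (fun k _ => by rwa [hstep]) h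
  have hfirst : a - n * p ∈ Set.Ioo u v := by simpa using hn 0 N.zero_le
  have hlast := hn N le_rfl
  have hNb : |N * b| < v - u :=
    abs_lt.mpr ⟨by linarith [hfirst.2, hlast.1], by linarith [hfirst.1, hlast.2]⟩
  rwa [abs_mul, Nat.abs_cast] at hNb

theorem length_mul_lt_of_abs_mul_sub_le {p u v a d η : R} {ℓ q : ℕ} {j : ℤ} (hp : 0 < p)
    (hη : 0 ≤ η) (hℓ : 0 < ℓ) (hq : 0 < q) (hfar : q * η ≤ |q * d - j * p|)
    (hnear : |q * d - j * p| ≤ p - (v - u))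
    (h : ∀ i < ℓ, a + i * d ∈ periodicIoo p u v) :
    ℓ * η < v - u + q * η := by
  obtain ⟨L, rfl⟩ := Nat.exists_eq_add_one.mpr hℓ
  have hsub : ∀ k ≤ L / q, a + k * (q * d - j * p) ∈ periodicIoo p u v := by
    intro k hk
    have hkq : k * q ≤ L := (Nat.le_div_iff_mul_le hq).mp hk
    convert sub_intCast_mul_mem_periodicIoo (h (k * q) (by lia)) (k * j) using 1
    push_cast
    ring
  have hcount : ((L + 1 : ℕ) : R) ≤ q * ((L / q : ℕ) + 1) := by
    exact_mod_cast Nat.lt_mul_div_succ L hq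
  calc ((L + 1 : ℕ) : R) * η
      ≤ q * ((L / q : ℕ) + 1) * η := by gcongr
    _ = (L / q : ℕ) * (q * η) + q * η := by ring
    _ ≤ (L / q : ℕ) * |q * d - j * p| + q * η := by gcongr
    _ < v - u + q * η := by
      gcongr
      exact mul_abs_lt_of_forall_mem_periodicIoo hp hnear hsub

end PeriodicIoo

theorem exists_nat_int_abs_mul_sub_mul_le {p : ℝ} (hp : 0 < p) (d : ℝ) {r : ℕ} (hr : 0 < r) :
    ∃ (q : ℕ) (j : ℤ), 0 < q ∧ q ≤ r ∧ |q * d - j * p| ≤ p / (r + 1) := by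
  obtain ⟨q, hq, hqr, hle⟩ := Real.exists_nat_abs_mul_sub_round_le (d / p) hr
  refine ⟨q, round (q * (d / p)), hq, hqr, ?_⟩
  have hscale : q * d - round (q * (d / p)) * p = (q * (d / p) - round (q * (d / p))) * p := by
    rw [sub_mul, mul_assoc, div_mul_cancel₀ _ hp.ne']
  rwa [hscale, abs_mul, abs_of_pos hp, ← le_div_iff₀ hp, div_right_comm, div_self hp.ne']

theorem length_mul_lt_of_forall_mem_periodicIoo {p u v a d η : ℝ} {ℓ r : ℕ} (hp : 0 < p)
    (hη : 0 ≤ η) (hℓ : 0 < ℓ) (hr : 0 < r) (hgap : p / (r + 1) ≤ p - (v - u))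
    (hfar : ∀ (j : ℤ) (q : ℕ), 0 < q → q ≤ r → q * η ≤ |q * d - j * p|)
    (h : ∀ i < ℓ, a + i * d ∈ periodicIoo p u v) :
    ℓ * η < v - u + r * η := by
  obtain ⟨q, j, hq, hqr, hnear⟩ := exists_nat_int_abs_mul_sub_mul_le hp d hr
  calc ℓ * η < v - u + q * η :=
        length_mul_lt_of_abs_mul_sub_le hp hη hℓ hq (hfar j q hq hqr) (hnear.trans hgap) h
    _ ≤ v - u + r * η := by gcongr

theorem mul_le_abs_mul_sub_of_notMem_Ioo {K : Type*} [Field K] [LinearOrder K]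
    [IsStrictOrderedRing K] {p d δ q j : K} (hq : 0 < q)
    (hd : d ∉ Set.Ioo ((j / q - δ) * p) ((j / q + δ) * p)) :
    q * (δ * p) ≤ |q * d - j * p| := by
  have hfactor : q * d - j * p = q * (d - j / q * p) := by field_simp
  rw [hfactor, abs_mul, abs_of_pos hq]
  refine mul_le_mul_of_nonneg_left (le_of_not_gt fun hlt => hd ?_) hq.le
  obtain ⟨hlow, hup⟩ := abs_lt.mp hlt
  exact ⟨by linarith, by linarith⟩

theorem IsAltLabeling.exists_forall_mem_Ioc {r : ℕ} {D : ℝ} {χ : ℝ → ℤ}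
    (hχ : IsAltLabeling r D χ) (hr : r ≠ 0) :
    ∃ c : ℝ, ∀ x, χ x = 1 → ∃ n : ℤ, x - n * (r * D) ∈ Set.Ioc c (c + (r * D - D)) := by
  obtain ⟨m, -, hpos, -⟩ := hχ
  refine ⟨m * D, fun x hx => ?_⟩
  obtain ⟨n, hlow, hup⟩ := (hpos x).mp hx
  have hend : ((n : ℝ) + (r - 1) / r) * (r * D) = n * (r * D) + (r * D - D) := by field_simp
  exact ⟨n, by linarith, by linarith⟩

theorem div_add_one_le_sub_two_mul {r D δ : ℝ} (hr : 0 < r) (hD : 0 ≤ D)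
    (hδ : δ ≤ 1 / (2 * r * (r + 1))) :
    r * D / (r + 1) ≤ D - 2 * (δ * (r * D)) := by
  calc r * D / (r + 1) = D - 2 * (1 / (2 * r * (r + 1)) * (r * D)) := by field_simp; ring
    _ ≤ D - 2 * (δ * (r * D)) := by gcongr

theorem mono_transversal_length_bound (r : ℕ) (hr : 2 ≤ r) (D δ : ℝ)
    (hD : 0 < D) (hδ : 0 < δ) (hδ' : δ ≤ 1 / (2 * (r : ℝ) * ((r : ℝ) + 1)))
    (χ : ℝ → ℤ) (hχ : IsAltLabeling r D χ)
    (a d : ℝ) (ℓ : ℕ) (hℓ : 0 < ℓ)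
    (hd : ∀ i : ℤ, ∀ q : ℕ, 1 ≤ q → q ≤ r →
      d ∉ Set.Ioo (((i : ℝ) / (q : ℝ) - δ) * ((r : ℝ) * D))
                  (((i : ℝ) / (q : ℝ) + δ) * ((r : ℝ) * D)))
    (y : ℕ → ℝ)
    (hy : ∀ i < ℓ, |y i - (a + (i : ℝ) * d)| < δ * (r : ℝ) * D ∧ χ (y i) = 1) :
    (ℓ : ℝ) ≤ 3 * (r : ℝ) / δ := by
  have hr0 : 0 < r := by lia
  have hp : 0 < r * D := by positivity
  have hgap : r * D / (r + 1) ≤ D - 2 * (δ * (r * D)) :=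
    div_add_one_le_sub_two_mul (by positivity) hD.le hδ'
  obtain ⟨c, hc⟩ := hχ.exists_forall_mem_Ioc hr0.ne'
  have hmem : ∀ i < ℓ, a + i * d ∈
      periodicIoo (r * D) (c - δ * (r * D)) (c + (r * D - D) + δ * (r * D)) := by
    intro i hi
    obtain ⟨hdist, hlabel⟩ := hy i hi
    obtain ⟨n, hn⟩ := hc _ hlabel
    exact mem_periodicIoo_of_abs_sub_lt (Set.Ioc_subset_Icc_self hn) (by rwa [← mul_assoc])
  have hlen := length_mul_lt_of_forall_mem_periodicIoo hp (by positivity) hℓ hr0 (by linarith)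
    (fun j q hq hqr => mul_le_abs_mul_sub_of_notMem_Ioo (by positivity) (hd j q hq hqr)) hmem
  have hgap_pos : 0 < r * D / (r + 1) := by positivity
  have hδD : δ * (r * D) ≤ D := by linarith
  rw [le_div_iff₀ hδ]
  refine le_of_mul_le_mul_right ?_ hp
  calc ℓ * δ * (r * D) ≤ r * D + r * (δ * (r * D)) := by linarith
    _ ≤ r * D + r * D := by gcongr
    _ ≤ 3 * r * (r * D) := by nlinarith [(Nat.one_le_cast (α := ℝ)).mpr hr0]
end

section
/- Let D, r, t, ℓ be positive integers with r ≥ 2 and ℓ ≥ t(r+1)+2, and let 0 < ε < 1/(2r) be a real number. If the integers {1,…,rtD} are labeled by an (r−1,1;D)-alternate labeling and X ⊆ {1,…,rtD} is an AP_ℓ(ε) all of whose elements have label +1, then there exists 0 ≤ i ≤ rt−1 such that the D-block [iD+1,(i+1)D] satisfies |X ∩ [iD+1,(i+1)D]| ≥ ℓ/(r−1). -/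
/-!
The `+1` part of an `(r-1,1;D)`-alternate labeling is a union of intervals of length `(r-1)D`
separated by gaps of length `D`. If the progression jumped over such a gap, its common difference
`d` would satisfy `(1+2ε)d > D`, hence `(r+1)d > rD` because `2εr < 1`; its `ℓ ≥ t(r+1)+2` terms
would then span more than `t(r+1)d > rtD`. So all terms lie in a single one of these intervals,
which consists of `r-1` blocks, and the pigeonhole principle gives the block.
-/

namespace IsAPeps

variable {ε : ℝ} {k : ℕ} {x : ℕ → ℤ}

lemma eps_pos (h : IsAPeps ε k x) (hk : 0 < k) : 0 < ε := by
  obtain ⟨a, d, hd, hx⟩ := h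
  exact pos_of_mul_pos_left ((abs_nonneg _).trans_lt (hx 0 hk)) hd.le

lemma strictMonoOn (h : IsAPeps ε k x) (hε : ε ≤ 1 / 2) : StrictMonoOn x (Set.Iio k) := by
  obtain ⟨a, d, hd, hx⟩ := h
  intro p hp q hq hpq
  have hp' := abs_lt.1 (hx p hp)
  have hq' := abs_lt.1 (hx q hq)
  have hpq' : (p : ℝ) + 1 ≤ q := by exact_mod_cast hpq
  have hlt : (x p : ℝ) < x q := by nlinarith
  exact_mod_cast hlt

lemma card_image_range (h : IsAPeps ε k x) (hε : ε ≤ 1 / 2) :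
    ((Finset.range k).image x).card = k := by
  rw [Finset.card_image_of_injOn, Finset.card_range]
  simpa only [Finset.coe_range] using (h.strictMonoOn hε).injOn

lemma mul_abs_sub_le (h : IsAPeps ε k x) {p q u v : ℕ} (hp : p < k) (hq : q < k) (hu : u < k)
    (hv : v < k) (huv : 0 ≤ (v : ℝ) - u - 2 * ε) :
    ((v : ℝ) - u - 2 * ε) * |(x q : ℝ) - x p| ≤
      (|(q : ℝ) - p| + 2 * ε) * ((x v : ℝ) - x u) := by
  have hε : 0 < ε := h.eps_pos (by omega)
  obtain ⟨a, d, hd, hx⟩ := h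
  have hupper : |(x q : ℝ) - x p| ≤ (|(q : ℝ) - p| + 2 * ε) * d :=
    calc |(x q : ℝ) - x p|
        = |((q : ℝ) - p) * d + (x q - (a + q * d)) - (x p - (a + p * d))| := by
          congr 1; ring
      _ ≤ |((q : ℝ) - p) * d| + |x q - (a + q * d)| + |x p - (a + p * d)| :=
          (abs_sub _ _).trans (add_le_add_left (abs_add_le _ _) _)
      _ ≤ (|(q : ℝ) - p| + 2 * ε) * d := by
          rw [abs_mul, abs_of_pos hd]
          linarith [hx p hp, hx q hq]
  have hlower : ((v : ℝ) - u - 2 * ε) * d ≤ x v - x u := by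
    linarith [(abs_lt.1 (hx u hu)).2, (abs_lt.1 (hx v hv)).1]
  calc ((v : ℝ) - u - 2 * ε) * |(x q : ℝ) - x p|
      ≤ ((v : ℝ) - u - 2 * ε) * ((|(q : ℝ) - p| + 2 * ε) * d) := by gcongr
    _ = (|(q : ℝ) - p| + 2 * ε) * (((v : ℝ) - u - 2 * ε) * d) := by ring
    _ ≤ (|(q : ℝ) - p| + 2 * ε) * (x v - x u) := by gcongr

lemma abs_succ_sub_le (h : IsAPeps ε k x) {s D : ℝ} (hs : 0 < s) (hD : 0 ≤ D)
    (hsk : (1 + 2 * ε) * s ≤ (k : ℝ) - 1 - 2 * ε) (hspan : (x (k - 1) : ℝ) - x 0 ≤ s * D)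
    {i : ℕ} (hi : i + 1 < k) : |(x (i + 1) : ℝ) - x i| ≤ D := by
  have hε : 0 < ε := h.eps_pos (by omega)
  have hpos : 0 < (k : ℝ) - 1 - 2 * ε := lt_of_lt_of_le (by positivity) hsk
  have hcompare := h.mul_abs_sub_le (p := i) (q := i + 1) (u := 0) (v := k - 1)
    (by omega) hi (by omega) (by omega)
  rw [Nat.cast_pred (by omega), Nat.cast_zero, sub_zero, Nat.cast_succ, add_sub_cancel_left,
    abs_one] at hcompare
  refine le_of_mul_le_mul_left ?_ hpos
  calc ((k : ℝ) - 1 - 2 * ε) * |(x (i + 1) : ℝ) - x i|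
      ≤ (1 + 2 * ε) * (x (k - 1) - x 0) := hcompare hpos.le
    _ ≤ (1 + 2 * ε) * (s * D) := by gcongr
    _ = ((1 + 2 * ε) * s) * D := by ring
    _ ≤ ((k : ℝ) - 1 - 2 * ε) * D := by gcongr

end IsAPeps

/-- The `i`-th maximal interval labeled `+1` by the `(r-1,1;D)`-alternate labeling with offset
`m`, its endpoints written as multiples of `D`. -/
def plusInterval (r : ℕ) (D : ℝ) (m i : ℤ) : Set ℝ :=
  Set.Ioc (((i : ℝ) * r + m) * D) (((i : ℝ) * r + m + (r - 1)) * D)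

lemma IsAltLabeling.exists_forall_eq_one_iff {r : ℕ} {D : ℝ} {χ : ℝ → ℤ}
    (h : IsAltLabeling r D χ) (hr : r ≠ 0) :
    ∃ m : ℤ, ∀ y : ℝ, χ y = 1 ↔ ∃ i : ℤ, y ∈ plusInterval r D m i := by
  obtain ⟨m, -, hplus, -⟩ := h
  refine ⟨m, fun y => (hplus y).trans (exists_congr fun i => ?_)⟩
  have hleft : (i : ℝ) * (r * D) + m * D = (i * r + m) * D := by ring
  have hright : ((i : ℝ) + (r - 1) / r) * (r * D) + m * D = (i * r + m + (r - 1)) * D := by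
    field_simp
    ring
  rw [hleft, hright, plusInterval, Set.mem_Ioc]

section plusInterval

variable {r : ℕ} {D : ℝ} {m : ℤ}

lemma lt_sub_of_mem_plusInterval (hD : 0 ≤ D) {i j : ℤ} {y z : ℝ} (hy : y ∈ plusInterval r D m i)
    (hz : z ∈ plusInterval r D m j) (hij : i < j) : D < z - y := by
  have hij' : (i : ℝ) + 1 ≤ j := by exact_mod_cast hij
  have hstep : ((i : ℝ) + 1) * (r * D) ≤ j * (r * D) := by gcongr
  linarith [hy.2, hz.1]

lemma eq_of_mem_plusInterval_of_abs_sub_le (hD : 0 ≤ D) {i j : ℤ} {y z : ℝ}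
    (hy : y ∈ plusInterval r D m i) (hz : z ∈ plusInterval r D m j) (hyz : |z - y| ≤ D) :
    i = j := by
  rw [abs_sub_le_iff] at hyz
  rcases lt_trichotomy i j with hij | hij | hij
  · exact absurd (lt_sub_of_mem_plusInterval hD hy hz hij) hyz.1.not_gt
  · exact hij
  · exact absurd (lt_sub_of_mem_plusInterval hD hz hy hij) hyz.2.not_gt

lemma exists_forall_mem_plusInterval (hD : 0 ≤ D) {k : ℕ} {y : ℕ → ℝ}
    (hmem : ∀ n < k, ∃ i : ℤ, y n ∈ plusInterval r D m i)
    (hgap : ∀ n, n + 1 < k → |y (n + 1) - y n| ≤ D) :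
    ∃ i : ℤ, ∀ n < k, y n ∈ plusInterval r D m i := by
  rcases k.eq_zero_or_pos with rfl | hk
  · exact ⟨0, fun n hn => absurd hn n.not_lt_zero⟩
  obtain ⟨i, hi⟩ := hmem 0 hk
  refine ⟨i, fun n => ?_⟩
  induction n with
  | zero => exact fun _ => hi
  | succ n ih =>
    intro hn
    obtain ⟨j, hj⟩ := hmem (n + 1) hn
    rwa [eq_of_mem_plusInterval_of_abs_sub_le hD (ih (by omega)) hj (hgap n hn)]

end plusInterval

lemma intCast_mem_plusInterval_iff {r D : ℕ} (hr : 0 < r) {m i n : ℤ} :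
    (n : ℝ) ∈ plusInterval r D m i ↔
      n ∈ Finset.Icc ((i * r + m) * D + 1) ((i * r + m + ((r - 1 : ℕ) : ℤ)) * D) := by
  rw [plusInterval, Set.mem_Ioc, Finset.mem_Icc, Int.add_one_le_iff, ← Nat.cast_pred hr]
  exact_mod_cast Iff.rfl

/-- The `D`-block `[bD+1,(b+1)D]`, for an arbitrary integer index `b`. -/
noncomputable def block (D b : ℤ) : Finset ℤ :=
  Finset.Icc (b * D + 1) ((b + 1) * D)

/-- The index of the `D`-block containing `n`, when `D` is positive. -/
def blockIndex (D n : ℤ) : ℤ :=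
  (n - 1) / D

section block

variable {D : ℤ}

lemma blockIndex_mem_Ico_iff (hD : 0 < D) {n p q : ℤ} :
    blockIndex D n ∈ Finset.Ico p q ↔ n ∈ Finset.Icc (p * D + 1) (q * D) := by
  rw [blockIndex, Finset.mem_Ico, Finset.mem_Icc, Int.le_ediv_iff_mul_le hD,
    Int.ediv_lt_iff_lt_mul hD, le_sub_iff_add_le, Int.sub_one_lt_iff]

lemma blockIndex_eq_iff (hD : 0 < D) {n b : ℤ} : blockIndex D n = b ↔ n ∈ block D b := by
  rw [block, ← blockIndex_mem_Ico_iff hD, Finset.mem_Ico, Int.lt_add_one_iff, le_antisymm_iff,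
    and_comm]

lemma mem_Ico_of_inter_block_nonempty (hD : 0 < D) {X : Finset ℤ} {p q b : ℤ}
    (hX : X ⊆ Finset.Icc (p * D + 1) (q * D)) (hb : (X ∩ block D b).Nonempty) :
    b ∈ Finset.Ico p q := by
  obtain ⟨n, hn⟩ := hb
  rw [Finset.mem_inter, ← blockIndex_eq_iff hD] at hn
  exact hn.2 ▸ (blockIndex_mem_Ico_iff hD).2 (hX hn.1)

lemma exists_inter_block_nonempty_and_card_div_le (hD : 0 < D) {X : Finset ℤ} {p : ℤ} {k : ℕ}
    (hne : X.Nonempty) (hX : X ⊆ Finset.Icc (p * D + 1) ((p + k) * D)) :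
    ∃ b : ℤ, (X ∩ block D b).Nonempty ∧ (X.card : ℝ) / k ≤ (X ∩ block D b).card := by
  have hmaps : ∀ n ∈ X, blockIndex D n ∈ Finset.Ico p (p + k) := fun n hn =>
    (blockIndex_mem_Ico_iff hD).2 (hX hn)
  have hIco : (Finset.Ico p (p + k)).Nonempty := hne.elim fun n hn => ⟨_, hmaps n hn⟩
  have hk : 0 < k := by simpa using hIco
  obtain ⟨b, -, hb⟩ := Finset.exists_le_card_fiber_of_nsmul_le_card_of_maps_to
    (b := (X.card : ℝ) / k) hmaps hIco (by
      rw [Int.card_Ico, add_sub_cancel_left, Int.toNat_natCast, nsmul_eq_mul,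
        mul_div_cancel₀ _ (by positivity)])
  simp only [blockIndex_eq_iff hD, Finset.filter_mem_eq_inter] at hb
  have hb_pos : (0 : ℝ) < (X ∩ block D b).card :=
    (div_pos (Nat.cast_pos.2 hne.card_pos) (Nat.cast_pos.2 hk)).trans_le hb
  exact ⟨b, Finset.card_pos.1 (by exact_mod_cast hb_pos), hb⟩

end block

lemma one_add_two_mul_mul_le {r t ℓ : ℕ} {ε : ℝ} (hr : 0 < r) (hℓ : t * (r + 1) + 2 ≤ ℓ)
    (hε : ε ≤ 1 / (2 * (r : ℝ))) : (1 + 2 * ε) * (r * t) ≤ (ℓ : ℝ) - 1 - 2 * ε := by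
  have hr' : (1 : ℝ) ≤ r := by exact_mod_cast hr
  have hεr : 2 * ε * r ≤ 1 := by
    rw [le_div_iff₀ (by positivity)] at hε
    linarith
  have hε1 : 2 * ε ≤ 1 := by
    rcases le_total ε 0 with h | h
    · linarith
    · nlinarith
  have hℓ' : (t : ℝ) * (r + 1) + 2 ≤ ℓ := by exact_mod_cast hℓ
  calc (1 + 2 * ε) * (r * t) = r * t + 2 * ε * r * t := by ring
    _ ≤ r * t + 1 * t := by gcongr
    _ ≤ ℓ - 1 - 2 * ε := by linarith

theorem mono_APeps_concentrates_in_block (D r t ℓ : ℕ)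
    (hD : 0 < D) (hr : 2 ≤ r) (ht : 0 < t) (hℓ0 : 0 < ℓ)
    (hℓ : t * (r + 1) + 2 ≤ ℓ)
    (ε : ℝ) (hε : 0 < ε) (hε' : ε < 1 / (2 * (r : ℝ)))
    (χ : ℝ → ℤ) (hχ : IsAltLabeling r (D : ℝ) χ)
    (X : Finset ℤ) (hXsub : X ⊆ Finset.Icc (1 : ℤ) ((r * t * D : ℕ) : ℤ))
    (x : ℕ → ℤ) (hXx : X = (Finset.range ℓ).image x) (hap : IsAPeps ε ℓ x)
    (hlabel : ∀ n ∈ X, χ (n : ℝ) = 1) :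
    ∃ i : ℕ, i ≤ r * t - 1 ∧
      (ℓ : ℝ) / ((r : ℝ) - 1) ≤
        ((X ∩ Finset.Icc ((i : ℤ) * (D : ℤ) + 1) (((i : ℤ) + 1) * (D : ℤ))).card : ℝ) := by
  obtain ⟨m, hm⟩ := hχ.exists_forall_eq_one_iff (by omega)
  have hmem : ∀ i < ℓ, x i ∈ X := fun i hi =>
    hXx ▸ Finset.mem_image_of_mem x (Finset.mem_range.2 hi)
  have hspan : (x (ℓ - 1) : ℝ) - x 0 ≤ r * t * D := by
    have hlast := (Finset.mem_Icc.1 (hXsub (hmem (ℓ - 1) (by omega)))).2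
    have hfirst := (Finset.mem_Icc.1 (hXsub (hmem 0 hℓ0))).1
    exact_mod_cast (by linarith : x (ℓ - 1) - x 0 ≤ ((r * t * D : ℕ) : ℤ))
  obtain ⟨j, hj⟩ := exists_forall_mem_plusInterval (y := fun i => (x i : ℝ)) D.cast_nonneg
    (fun i hi => (hm _).1 (hlabel _ (hmem i hi)))
    (fun i => hap.abs_succ_sub_le (by positivity) D.cast_nonneg
      (one_add_two_mul_mul_le (by omega) hℓ hε'.le) hspan)
  have hDZ : (0 : ℤ) < D := by exact_mod_cast hD
  have hcard : X.card = ℓ := hXx ▸ hap.card_image_range (hε'.le.trans (by gcongr; norm_cast; omega))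
  have hXplus : X ⊆ Finset.Icc ((j * r + m) * D + 1) ((j * r + m + (r - 1 : ℕ)) * D) := by
    simpa only [hXx, Finset.image_subset_iff, Finset.mem_range,
      ← intCast_mem_plusInterval_iff (show 0 < r by omega)] using hj
  obtain ⟨b, hb_nonempty, hb⟩ :=
    exists_inter_block_nonempty_and_card_div_le hDZ ⟨x 0, hmem 0 hℓ0⟩ hXplus
  obtain ⟨hb0, hbrt⟩ := Finset.mem_Ico.1 <| mem_Ico_of_inter_block_nonempty (p := 0)
    (q := ((r * t : ℕ) : ℤ)) hDZ (by simpa using hXsub) hb_nonempty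
  lift b to ℕ using hb0
  rw [hcard, Nat.cast_pred (by omega)] at hb
  exact ⟨b, by omega, hb⟩
end

section
/- Let 0 < ε < 1/4 and let k be a sufficiently large integer. Then a (1,1;k−1)-alternate labeling of the set {1, …, 2⌊(k−2)/3⌋(k−1)} contains no monochromatic AP_k(ε); consequently W_ε(k,2) > 2⌊(k−2)/3⌋(k−1). -/
/-- The coloring `c` of `{1, …, N}` has a monochromatic `AP_k(ε)`. The colors may come from any
type, so that this applies to `±1`-valued labelings as well as to the colorings of
`HasMonoAPeps`. -/
def ContainsMonoAPeps {α : Type*} (ε : ℝ) (k N : ℕ) (c : ℤ → α) : Prop :=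
  ∃ x : ℕ → ℤ,
    (∀ i < k, x i ∈ Finset.Icc (1 : ℤ) (N : ℤ)) ∧
    (∀ i < k, ∀ j < k, c (x i) = c (x j)) ∧
    IsAPeps ε k x

section ApproximateProgressions

variable {ε D : ℝ} {k : ℕ} {x : ℕ → ℤ}

theorem IsAPeps.exists_abs_sub_sub_mul_lt (hx : IsAPeps ε k x) :
    ∃ d : ℝ, 0 < d ∧ ∀ i < k, ∀ j < k, |(x j - x i : ℝ) - (j - i) * d| < 2 * ε * d := by
  obtain ⟨a, d, hd, h⟩ := hx
  refine ⟨d, hd, fun i hi j hj => ?_⟩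
  calc |(x j - x i : ℝ) - (j - i) * d|
      = |((x j : ℝ) - (a + j * d)) - (x i - (a + i * d))| := by ring_nf
    _ ≤ |(x j : ℝ) - (a + j * d)| + |(x i : ℝ) - (a + i * d)| := abs_sub _ _
    _ < ε * d + ε * d := add_lt_add (h j hj) (h i hi)
    _ = 2 * ε * d := by ring

theorem IsAPeps.lt_succ (hx : IsAPeps ε k x) (hε : ε ≤ 1 / 2) {i : ℕ} (hi : i + 1 < k) :
    x i < x (i + 1) := by
  obtain ⟨d, hd, h⟩ := hx.exists_abs_sub_sub_mul_lt
  have hgap := (abs_lt.mp (h i (by lia) (i + 1) hi)).1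
  push_cast at hgap
  have : (x i : ℝ) < x (i + 1) := by nlinarith
  exact_mod_cast this

theorem IsAPeps.succ_sub_lt (hx : IsAPeps ε k x) (hε : ε ≤ 1 / 2)
    (hspan : (1 + 2 * ε) * (x (k - 1) - x 0) ≤ D * (k - 1 - 2 * ε)) {i : ℕ} (hi : i + 1 < k) :
    (x (i + 1) - x i : ℝ) < D := by
  obtain ⟨d, hd, h⟩ := hx.exists_abs_sub_sub_mul_lt
  have hgap := (abs_lt.mp (h i (by lia) (i + 1) hi)).2
  have hrange := (abs_lt.mp (h 0 (by lia) (k - 1) (by lia))).1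
  push_cast [Nat.cast_sub (show 1 ≤ k by lia)] at hgap hrange
  have hk : (2 : ℝ) ≤ k := by exact_mod_cast (by lia : 2 ≤ k)
  have hε₀ : 0 < 2 * ε :=
    pos_of_mul_pos_left ((abs_nonneg _).trans_lt (h i (by lia) i (by lia))) hd.le
  have hd_lt : (1 + 2 * ε) * d < D := by
    refine lt_of_mul_lt_mul_right ?_ (by linarith : 0 ≤ k - 1 - 2 * ε)
    calc (1 + 2 * ε) * d * (k - 1 - 2 * ε)
        = (1 + 2 * ε) * ((k - 1 - 2 * ε) * d) := by ring
      _ < (1 + 2 * ε) * (x (k - 1) - x 0) := by gcongr; linarith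
      _ ≤ D * (k - 1 - 2 * ε) := hspan
  linarith

theorem add_natCast_le_of_forall_lt_succ (hx : ∀ i, i + 1 < k → x i < x (i + 1)) {i : ℕ}
    (hi : i < k) : x 0 + i ≤ x i := by
  induction i with
  | zero => simp
  | succ i ih =>
    have hstep := hx i hi
    have := ih (by lia)
    push_cast
    lia

end ApproximateProgressions

section Blocks

variable {D : ℝ}

theorem ceil_div_eq_of_even_sub (hD : 0 < D) {x y : ℝ} (hxy : x ≤ y) (hyx : y ≤ x + D)
    (heven : Even (⌈y / D⌉ - ⌈x / D⌉)) : ⌈y / D⌉ = ⌈x / D⌉ := by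
  have hle : ⌈x / D⌉ ≤ ⌈y / D⌉ := by gcongr
  have hle_add_one : ⌈y / D⌉ ≤ ⌈x / D⌉ + 1 := by
    rw [← Int.ceil_add_one, ← div_self hD.ne', ← add_div]
    gcongr
  obtain ⟨n, hn⟩ := heven
  lia

theorem sub_lt_of_ceil_div_eq (hD : 0 < D) {x y : ℝ} (h : ⌈y / D⌉ = ⌈x / D⌉) : y - x < D := by
  have hy := Int.le_ceil (y / D)
  have hx := Int.ceil_lt_add_one (x / D)
  rw [h] at hy
  have : (y - x) / D < 1 := by rw [sub_div]; linarith
  simpa using (div_lt_iff₀ hD).mp this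

theorem IsAPeps.not_forall_even_ceil_div_sub {ε : ℝ} {k : ℕ} {x : ℕ → ℤ} (hx : IsAPeps ε k x)
    (hε : ε ≤ 1 / 2) (hD : 0 < D) (hDk : D ≤ k - 1)
    (hspan : (1 + 2 * ε) * (x (k - 1) - x 0) ≤ D * (k - 1 - 2 * ε)) :
    ¬ ∀ i < k, ∀ j < k, Even (⌈x i / D⌉ - ⌈x j / D⌉) := by
  intro heven
  have hk : 0 < k := Nat.cast_pos.mp (by linarith : (0 : ℝ) < k)
  have hblock : ∀ i < k, ⌈x i / D⌉ = ⌈x 0 / D⌉ := by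
    intro i
    induction i with
    | zero => simp
    | succ i ih =>
      intro hi
      have hlt : (x i : ℝ) < x (i + 1) := by exact_mod_cast hx.lt_succ hε hi
      have hgap := hx.succ_sub_lt hε hspan hi
      rw [← ih (by lia)]
      exact ceil_div_eq_of_even_sub hD hlt.le (by linarith) (heven _ hi _ (by lia))
  have hupper := sub_lt_of_ceil_div_eq hD (hblock (k - 1) (by lia))
  have hlower : (x 0 + (k - 1 : ℕ) : ℝ) ≤ x (k - 1) := by
    exact_mod_cast add_natCast_le_of_forall_lt_succ (fun _ => hx.lt_succ hε) (by lia : k - 1 < k)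
  push_cast [Nat.cast_sub hk] at hlower
  linarith

theorem not_containsMonoAPeps_of_even_ceil_div_sub {α : Type*} {c : ℤ → α} {ε : ℝ} {k N : ℕ}
    (hε : 0 < ε) (hε' : ε ≤ 1 / 2) (hD : 0 < D) (hDk : D ≤ k - 1)
    (hN : (1 + 2 * ε) * (N - 1) ≤ D * (k - 1 - 2 * ε))
    (hc : ∀ y z, c y = c z → Even (⌈y / D⌉ - ⌈z / D⌉)) : ¬ ContainsMonoAPeps ε k N c := by
  rintro ⟨x, hmem, hmono, hx⟩
  have hk : 0 < k := Nat.cast_pos.mp (by linarith : (0 : ℝ) < k)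
  have hfirst : (1 : ℝ) ≤ x 0 := by exact_mod_cast (Finset.mem_Icc.mp (hmem 0 hk)).1
  have hlast : (x (k - 1) : ℝ) ≤ N := by
    exact_mod_cast (Finset.mem_Icc.mp (hmem (k - 1) (by lia))).2
  refine hx.not_forall_even_ceil_div_sub hε' hD hDk ?_ fun i hi j hj => hc _ _ (hmono i hi j hj)
  calc (1 + 2 * ε) * (x (k - 1) - x 0) ≤ (1 + 2 * ε) * (N - 1) := by gcongr
    _ ≤ D * (k - 1 - 2 * ε) := hN

theorem IsAltLabeling.even_ceil_div_sub {χ : ℝ → ℤ} (hχ : IsAltLabeling 2 D χ) (hD : 0 < D)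
    {x y : ℝ} (hxy : χ x = χ y) : Even (⌈x / D⌉ - ⌈y / D⌉) := by
  obtain ⟨m, -, hone, -⟩ := hχ
  have hodd (z : ℝ) : χ z = 1 ↔ Odd (⌈z / D⌉ - m) := by
    rw [hone]
    refine exists_congr fun i => ?_
    rw [sub_eq_iff_eq_add, Int.ceil_eq_iff, lt_div_iff₀ hD, div_le_iff₀ hD]
    push_cast
    ring_nf
  have hiff : Odd (⌈x / D⌉ - m) ↔ Odd (⌈y / D⌉ - m) := by rw [← hodd, ← hodd, hxy]
  simpa using Int.even_sub'.mpr hiff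

end Blocks

theorem exists_sum_line_apply_eq {α ι M : Type*} [Fintype ι] [AddCommMonoid M]
    (l : Combinatorics.Line α ι) (f : α → M) :
    ∃ n : ℕ, 0 < n ∧ ∃ b : M, ∀ s, ∑ i, f (l s i) = b + n • f s := by
  classical
  refine ⟨({i | l.idxFun i = none} : Finset ι).card, ?_, ∑ i, (l.idxFun i).elim 0 f, fun s => ?_⟩
  · obtain ⟨i, hi⟩ := l.proper
    exact Finset.card_pos.mpr ⟨i, by simpa using hi⟩
  · rw [← Finset.sum_const, Finset.sum_filter, ← Finset.sum_add_distrib]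
    refine Finset.sum_congr rfl fun i _ => ?_
    rw [Combinatorics.Line.coe_apply]
    cases l.idxFun i <;> simp

theorem exists_forall_coloring_mono_arith_prog (κ : Type*) [Finite κ] (k : ℕ) :
    ∃ N : ℕ, ∀ c : ℕ → κ, ∃ a d : ℕ, 0 < d ∧ ∃ col, ∀ i < k,
      a + i * d ∈ Finset.Icc 1 N ∧ c (a + i * d) = col := by
  obtain ⟨ι, _, hι⟩ := Combinatorics.Line.exists_mono_in_high_dimension (Fin k) κ
  refine ⟨Fintype.card ι * k + 1, fun c => ?_⟩
  obtain ⟨l, col, hl⟩ := hι fun v => c (∑ i, (v i : ℕ) + 1)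
  obtain ⟨d, hd, b, hsum⟩ := exists_sum_line_apply_eq l fun j : Fin k => (j : ℕ)
  refine ⟨b + 1, d, hd, col, fun i hi => ?_⟩
  have hterm : b + 1 + i * d = ∑ j, (l ⟨i, hi⟩ j : ℕ) + 1 := by
    rw [hsum, smul_eq_mul]
    ring
  have hle : ∑ j, (l ⟨i, hi⟩ j : ℕ) ≤ Fintype.card ι * k :=
    Finset.sum_le_card_nsmul _ _ _ fun j _ => (l ⟨i, hi⟩ j).isLt.le
  rw [hterm, Finset.mem_Icc]
  exact ⟨by lia, hl ⟨i, hi⟩⟩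

theorem HasMonoAPeps.mono {ε : ℝ} {k r M N : ℕ} (h : HasMonoAPeps ε k r M) (hMN : M ≤ N) :
    HasMonoAPeps ε k r N := by
  intro c
  obtain ⟨x, hmem, hx⟩ := h c
  exact ⟨x, fun i hi => Finset.Icc_subset_Icc_right (by exact_mod_cast hMN) (hmem i hi), hx⟩

theorem exists_hasMonoAPeps {ε : ℝ} (hε : 0 < ε) (k r : ℕ) : ∃ N, HasMonoAPeps ε k r N := by
  obtain ⟨N, hN⟩ := exists_forall_coloring_mono_arith_prog (Fin r) k
  refine ⟨N, fun c => ?_⟩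
  obtain ⟨a, d, hd, col, h⟩ := hN fun n => c n
  refine ⟨fun i => (a + i * d : ℕ), fun i hi => ?_,
    fun i hi j hj => (h i hi).2.trans (h j hj).2.symm, a, d, by positivity, fun i _ => ?_⟩
  · obtain ⟨hpos, hle⟩ := Finset.mem_Icc.mp (h i hi).1
    exact Finset.mem_Icc.mpr ⟨Nat.cast_le.mpr hpos, Nat.cast_le.mpr hle⟩
  · push_cast
    rw [sub_self, abs_zero]
    positivity

theorem lt_Weps_of_not_hasMonoAPeps {ε : ℝ} (hε : 0 < ε) {k r N : ℕ}
    (h : ¬ HasMonoAPeps ε k r N) : N < Weps ε k r := by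
  obtain ⟨M, hM⟩ := exists_hasMonoAPeps hε k r
  -- `sInf ∅ = 0`, so van der Waerden's theorem is needed even for a lower bound.
  have hW : Weps ε k r ∈ {N | 0 < N ∧ HasMonoAPeps ε k r N} :=
    Nat.sInf_mem ⟨M + 1, M.succ_pos, hM.mono M.le_succ⟩
  exact lt_of_not_ge fun hle => h (hW.2.mono hle)

theorem two_color_lower_bound_general {ε : ℝ} (hε : 0 < ε) (hε' : ε ≤ 1 / 2) {k N : ℕ}
    (hk : 2 ≤ k) (hN : (1 + 2 * ε) * (N - 1) ≤ (k - 1) * (k - 1 - 2 * ε)) :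
    (∀ χ : ℝ → ℤ, IsAltLabeling 2 (k - 1) χ → ¬ ContainsMonoAPeps ε k N fun z => χ z) ∧
      N < Weps ε k 2 := by
  have hD : (0 : ℝ) < k - 1 := sub_pos.mpr (by exact_mod_cast hk)
  refine ⟨fun χ hχ => ?_, lt_Weps_of_not_hasMonoAPeps hε fun hmono => ?_⟩
  · exact not_containsMonoAPeps_of_even_ceil_div_sub hε hε' hD le_rfl hN
      fun _ _ => hχ.even_ceil_div_sub hD
  · let parity : ℤ → Fin 2 := fun z => if Even ⌈z / (k - 1 : ℝ)⌉ then 0 else 1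
    have hparity : ContainsMonoAPeps ε k N parity := hmono parity
    refine not_containsMonoAPeps_of_even_ceil_div_sub hε hε' hD le_rfl hN
      (fun y z hyz => ?_) hparity
    dsimp only [parity] at hyz
    rw [Int.even_sub]
    grind

theorem span_bound_two_mul_div_three_mul {ε : ℝ} (hε : 0 < ε) (hε' : ε ≤ 1 / 4) {k : ℕ}
    (hk : 2 ≤ k) :
    (1 + 2 * ε) * ((2 * ((k - 2) / 3) * (k - 1) : ℕ) - 1) ≤ (k - 1) * (k - 1 - 2 * ε) := by
  have hD : (1 : ℝ) ≤ k - 1 := by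
    have : (2 : ℝ) ≤ k := by exact_mod_cast hk
    linarith
  have hdiv : (((k - 2) / 3 : ℕ) : ℝ) ≤ (k - 2) / 3 := by
    simpa [Nat.cast_sub hk] using Nat.cast_div_le (α := ℝ) (m := k - 2) (n := 3)
  push_cast [Nat.cast_sub (show 1 ≤ k by lia)]
  calc (1 + 2 * ε) * (2 * ((k - 2) / 3 : ℕ) * (k - 1) - 1)
      ≤ (1 + 2 * ε) * (2 * ((k - 2) / 3) * (k - 1) - 1) := by gcongr
    _ ≤ (k - 1) * (k - 1 - 2 * ε) := by
      -- The difference is `(4 / 3) * (1 / 4 - ε) * (k - 2) * (k + 1 / 2) + k / 2 + 1`.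
      have : (0 : ℝ) ≤ (1 / 4 - ε) * ((k - 2) * (k + 1 / 2)) :=
        mul_nonneg (by linarith) (mul_nonneg (by linarith) (by linarith))
      linarith

theorem two_color_lower_bound (ε : ℝ) (hε : 0 < ε) (hε' : ε < 1 / 4) :
    ∃ k₀ : ℕ, ∀ k : ℕ, k₀ ≤ k →
      (∀ χ : ℝ → ℤ, IsAltLabeling 2 ((k : ℝ) - 1) χ →
        ¬ ∃ x : ℕ → ℤ,
          (∀ i < k, x i ∈ Finset.Icc (1 : ℤ) ((2 * ((k - 2) / 3) * (k - 1) : ℕ) : ℤ)) ∧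
          (∀ i < k, ∀ j < k, χ ((x i : ℝ)) = χ ((x j : ℝ))) ∧
          IsAPeps ε k x) ∧
      2 * ((k - 2) / 3) * (k - 1) < Weps ε k 2 :=
  ⟨2, fun _ hk => two_color_lower_bound_general hε (by linarith) hk
    (span_bound_two_mul_div_three_mul hε hε'.le hk)⟩
end

section
/- For every integer r ≥ 1 there exist a constant ε₀ > 0 and a positive real c_r depending only on r such that the following holds: for all real 0 < ε ≤ ε₀ and all integers k ≥ 2^r · r! · ε^{-1} · (log(1/(5ε)))^r, there exists an integer N ≥ c_r · k^r / (ε^{r-1} · (log(1/ε))^{\binom{r+1}{2}-1}) such that {1,…,N} admits a coloring with r colors containing no monochromatic AP_k(ε). -/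
/-!
Lay out along `ℤ` consecutive copies of the pattern `0 ⋯ 0 1 ⋯ 1 ⋯ (R - 1) ⋯ (R - 1)`, each shifted
cyclically by an independent uniform amount. Every colour recurs with bounded gaps, and by a union
bound over the `O(k ^ 5)` essentially different progressions of length `k`, for large `k` some
choice of shifts makes every colour appear along each of them.

Passing from `r` to `r + 1` colours, cut `{1, …, N}` into blocks of length `L`, let the random
colouring decide which colour is missing from each block, and put on the block a good colouring with
the remaining `r` colours. A monochromatic approximate progression of step at least `L / 2` follows
a progression of blocks, so it enters a block from which its colour is missing. One of smaller step
visits consecutive blocks, so it is stopped by a block missing its colour after a bounded number of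
blocks, and a positive proportion of its terms lies in a single block, contradicting the choice of
the colouring there. Each step gains a factor of order `k / ε`.
-/

section RandomFunctions

open MeasureTheory ProbabilityTheory Finset

variable {ι κ η : Type*}

lemma iIndepSet_pi_of_pairwise_disjoint {Ω : ι → Type*} [∀ i, MeasurableSpace (Ω i)]
    (μ : ∀ i, Measure (Ω i)) [∀ i, IsProbabilityMeasure (μ i)] {S : κ → Finset ι}
    (hS : Pairwise (Function.onFun Disjoint S)) {t : κ → ∀ i, Set (Ω i)}
    (ht : ∀ j i, MeasurableSet (t j i)) :
    iIndepSet (fun j ↦ (S j : Set ι).pi (t j)) (Measure.infinitePi μ) := by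
  classical
  rw [iIndepSet_iff_meas_biInter fun j ↦
    MeasurableSet.pi (S j).countable_toSet fun i _ ↦ ht j i]
  intro T
  let u (i : ι) : Set (Ω i) := ⋂ j ∈ T, ⋂ (_ : i ∈ S j), t j i
  have hu : ∀ i, MeasurableSet (u i) := fun i ↦
    T.measurableSet_biInter fun j _ ↦ MeasurableSet.iInter fun _ ↦ ht j i
  have hu_eq : ∀ j ∈ T, ∀ i ∈ S j, u i = t j i := by
    intro j hj i hi
    have hunique : ∀ j', i ∈ S j' → j' = j := fun j' hi' ↦
      hS.eq (Finset.not_disjoint_iff.2 ⟨i, hi', hi⟩)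
    refine (Set.iInter₂_subset_of_subset j hj (Set.iInter_subset _ hi)).antisymm ?_
    refine Set.subset_iInter₂ fun j' _ ↦ Set.subset_iInter fun hi' ↦ ?_
    rw [hunique j' hi']
  have hinter : ⋂ j ∈ T, (S j : Set ι).pi (t j) = (T.biUnion S : Set ι).pi u := by
    ext ω
    simp only [Set.mem_iInter, Set.mem_pi, mem_coe, mem_biUnion, forall_exists_index, and_imp]
    exact ⟨fun h i j hj hi ↦ hu_eq j hj i hi ▸ h j hj i hi,
      fun h j hj i hi ↦ hu_eq j hj i hi ▸ h i j hj hi⟩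
  rw [hinter, Measure.infinitePi_pi μ fun i _ ↦ hu i,
    prod_biUnion fun j _ j' _ hjj' ↦ hS hjj']
  refine prod_congr rfl fun j hj ↦ ?_
  rw [Measure.infinitePi_pi μ fun i _ ↦ ht j i]
  exact prod_congr rfl fun i hi ↦ by rw [hu_eq j hj i hi]

variable {Ω : Type*} [MeasurableSpace Ω] {μ : Measure Ω} [IsProbabilityMeasure μ]

lemma measureReal_biInter_compl_of_iIndepSet {s : κ → Set Ω} (hs : ∀ j, MeasurableSet (s j))
    (hind : iIndepSet s μ) (T : Finset κ) :
    μ.real (⋂ j ∈ T, (s j)ᶜ) = ∏ j ∈ T, (1 - μ.real (s j)) := by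
  have h := iIndep.meas_biInter (S := T) (s := fun j ↦ (s j)ᶜ) hind fun j _ ↦
    (MeasurableSpace.measurableSet_generateFrom (Set.mem_singleton _)).compl
  rw [measureReal_def, h, ENNReal.toReal_prod]
  exact prod_congr rfl fun j _ ↦ probReal_compl_eq_one_sub (hs j)

lemma exists_forall_notMem_of_sum_measureReal_lt_one {E : Finset η} {Bad : η → Set Ω}
    (h : ∑ e ∈ E, μ.real (Bad e) < 1) : ∃ ω, ∀ e ∈ E, ω ∉ Bad e := by
  by_contra! hcover
  have huniv : ⋃ e ∈ E, Bad e = Set.univ :=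
    Set.eq_univ_of_forall fun ω ↦ Set.mem_iUnion₂.2 (by simpa using hcover ω)
  have := measureReal_biUnion_finset_le (μ := μ) E Bad
  rw [huniv, probReal_univ] at this
  linarith

lemma exists_fun_forall_exists_eqOn {W : Type*} [Fintype W] [Nonempty W] {E : Finset η}
    {T : Finset κ} {S : η → κ → Finset ι} {m : ℕ} (p : η → κ → ι → W)
    (hS : ∀ e ∈ E, Pairwise (Function.onFun Disjoint (S e))) (hm : ∀ e ∈ E, ∀ j ∈ T, #(S e j) = m)
    (h : #E * (1 - (Fintype.card W : ℝ)⁻¹ ^ m) ^ #T < 1) :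
    ∃ ω : ι → W, ∀ e ∈ E, ∃ j ∈ T, ∀ i ∈ S e j, ω i = p e j i := by
  let _ : MeasurableSpace W := ⊤
  have _ : DiscreteMeasurableSpace W := ⟨fun _ ↦ trivial⟩
  let ν : Measure W := (PMF.uniformOfFintype W).toMeasure
  have hν : ∀ x, ν {x} = (Fintype.card W : ENNReal)⁻¹ := fun x ↦ by
    rw [PMF.toMeasure_apply_singleton _ _ (.singleton x), PMF.uniformOfFintype_apply]
  let μ : Measure (ι → W) := Measure.infinitePi fun _ ↦ ν
  let agree (e : η) (j : κ) : Set (ι → W) := (S e j : Set ι).pi fun i ↦ {p e j i}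
  have hagree : ∀ e ∈ E, ∀ j ∈ T, μ.real (agree e j) = (Fintype.card W : ℝ)⁻¹ ^ m := by
    intro e he j hj
    simp [measureReal_def, μ, agree, Measure.infinitePi_pi, hν, hm e he j hj]
  have hbad : ∀ e ∈ E,
      μ.real (⋂ j ∈ T, (agree e j)ᶜ) = (1 - (Fintype.card W : ℝ)⁻¹ ^ m) ^ #T := by
    intro e he
    rw [measureReal_biInter_compl_of_iIndepSet
      (fun j ↦ MeasurableSet.pi (S e j).countable_toSet fun _ _ ↦ .of_discrete)
      (iIndepSet_pi_of_pairwise_disjoint _ (hS e he) fun _ _ ↦ .of_discrete)]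
    exact prod_eq_pow_card fun j hj ↦ by rw [hagree e he j hj]
  obtain ⟨ω, hω⟩ := exists_forall_notMem_of_sum_measureReal_lt_one (μ := μ) (E := E)
    (Bad := fun e ↦ ⋂ j ∈ T, (agree e j)ᶜ) (by rwa [sum_congr rfl hbad, sum_const, nsmul_eq_mul])
  exact ⟨ω, fun e he ↦ by simpa [agree, Set.mem_pi] using hω e he⟩

end RandomFunctions

section ShiftedColor

open Finset

variable {w R : ℕ} [NeZero w] [NeZero R]

/-- The colouring whose restriction to each interval `[q * (w * R), (q + 1) * (w * R))` is the
cyclic pattern `0 ⋯ 0 1 ⋯ 1 ⋯ (R - 1) ⋯ (R - 1)`, every colour repeated `w` times, shifted by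
`g q`. Independent uniform shifts make it a random colouring with syndetic colour classes. -/
def shiftedColor (w R : ℕ) [NeZero w] [NeZero R] (g : ℤ → ZMod (w * R)) (b : ℤ) : Fin R :=
  ⟨(b + g (b / (w * R : ℕ))).val / w, Nat.div_lt_of_lt_mul (ZMod.val_lt _)⟩

lemma shiftedColor_eq_of_phase {g : ℤ → ZMod (w * R)} {b : ℤ} {c : Fin R} {t : ℕ} (ht : t < w)
    (h : b + g (b / (w * R : ℕ)) = (w * c + t : ℕ)) : shiftedColor w R g b = c := by
  have hlt : w * c + t < w * R := by
    calc w * c + t < w * (c + 1) := by rw [mul_add_one]; lia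
      _ ≤ w * R := Nat.mul_le_mul_left w c.2
  ext
  change (b + g (b / (w * R : ℕ))).val / w = c
  rw [h, ZMod.val_natCast_of_lt hlt, Nat.mul_add_div (NeZero.pos w), Nat.div_eq_of_lt ht, add_zero]

lemma shiftedColor_add_eq {g : ℤ → ZMod (w * R)} {b : ℤ} {c : Fin R}
    (hg : ∀ q ∈ ({b / (w * R : ℕ), b / (w * R : ℕ) + 1} : Finset ℤ), g q = (w * c : ℕ) - b)
    {t : ℕ} (ht : t < w) : shiftedColor w R g (b + t) = c := by
  refine shiftedColor_eq_of_phase ht ?_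
  have hM : (t : ℤ) < (w * R : ℕ) := by
    exact_mod_cast ht.trans_le (Nat.le_mul_of_pos_right w (NeZero.pos R))
  have hq : (b + t) / (w * R : ℕ) ∈
      ({b / (w * R : ℕ), b / (w * R : ℕ) + 1} : Finset ℤ) := by
    have h0 : b / (w * R : ℕ) ≤ (b + t) / (w * R : ℕ) := Int.ediv_le_ediv (by lia) (by lia)
    have h1 : (b + t) / (w * R : ℕ) ≤ (b + 1 * (w * R : ℕ)) / (w * R : ℕ) :=
      Int.ediv_le_ediv (by lia) (by lia)
    rw [Int.add_mul_ediv_right _ _ (by lia)] at h1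
    simp only [Finset.mem_insert, Finset.mem_singleton]
    lia
  rw [hg _ hq]
  push_cast
  ring

/-- Every colour class is syndetic with gaps bounded by `ℓ`: it meets all intervals of `ℓ`
consecutive integers. -/
def HasSyndeticFibers {κ : Type*} (ℓ : ℕ) (col : ℤ → κ) : Prop :=
  ∀ (b₀ : ℤ) c, ∃ b ∈ Set.Ico b₀ (b₀ + ℓ), col b = c

lemma hasSyndeticFibers_shiftedColor (g : ℤ → ZMod (w * R)) :
    HasSyndeticFibers (2 * (w * R)) (shiftedColor w R g) := by
  intro b₀ c
  have hM : (0 : ℤ) < (w * R : ℕ) := by exact_mod_cast NeZero.pos (w * R)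
  let n : ℤ := b₀ / (w * R : ℕ) + 1
  let u : ZMod (w * R) := (w * c : ℕ) - g n
  have hu : (u.val : ℤ) < (w * R : ℕ) := by exact_mod_cast u.val_lt
  refine ⟨n * (w * R : ℕ) + u.val, ?_, ?_⟩
  · have h0 := Int.lt_ediv_add_one_mul_self b₀ hM
    have h1 := Int.ediv_mul_le b₀ hM.ne'
    simp only [n, Set.mem_Ico, Nat.cast_mul, Nat.cast_ofNat] at *
    constructor <;> linarith
  · have hn : (n * (w * R : ℕ) + u.val) / ((w * R : ℕ) : ℤ) = n := by
      rw [add_comm, Int.add_mul_ediv_right _ _ hM.ne', Int.ediv_eq_zero_of_lt (by lia) hu, zero_add]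
    refine shiftedColor_eq_of_phase (NeZero.pos w) ?_
    have hwR : (w : ZMod (w * R)) * R = 0 := by exact_mod_cast ZMod.natCast_self (w * R)
    rw [hn]
    simp [u, hwR]

lemma pairwise_disjoint_ediv_pair {M : ℤ} (hM : 0 < M) {f : ℕ → ℤ}
    (hf : ∀ j, f j + 2 * M ≤ f (j + 1)) :
    Pairwise (Function.onFun Disjoint fun j ↦ ({f j / M, f j / M + 1} : Finset ℤ)) := by
  have hstep : ∀ j, f j / M + 2 ≤ f (j + 1) / M := fun j ↦ by
    rw [← Int.add_mul_ediv_right _ _ hM.ne']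
    exact Int.ediv_le_ediv hM (hf j)
  have hmono : Monotone fun j : ℕ ↦ f j / M - 2 * j :=
    monotone_nat_of_le_succ fun j ↦ by have := hstep j; push_cast; lia
  refine (pairwise_disjoint_on _).2 fun i j hij ↦ ?_
  have := hmono hij.le
  rw [Finset.disjoint_left]
  simp only [Finset.mem_insert, Finset.mem_singleton]
  lia

lemma exists_coloring_hitting_windows (w R : ℕ) [NeZero w] [NeZero R] {η : Type*} {E : Finset η}
    {f : η → ℕ → ℤ} {J : ℕ} (hf : ∀ e ∈ E, ∀ j, f e j + 2 * (w * R : ℕ) ≤ f e (j + 1))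
    (h : #E * R * (1 - ((w * R : ℕ) : ℝ)⁻¹ ^ 2) ^ J < 1) :
    ∃ col : ℤ → Fin R, HasSyndeticFibers (2 * (w * R)) col ∧
      ∀ e ∈ E, ∀ c, ∃ j < J, ∀ t < w, col (f e j + t) = c := by
  have hM0 : (0 : ℤ) < (w * R : ℕ) := by exact_mod_cast NeZero.pos (w * R)
  obtain ⟨g, hg⟩ := exists_fun_forall_exists_eqOn (W := ZMod (w * R)) (m := 2)
    (E := E ×ˢ (univ : Finset (Fin R))) (T := range J)
    (S := fun e j ↦ {f e.1 j / (w * R : ℕ), f e.1 j / (w * R : ℕ) + 1})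
    (fun e j _ ↦ (w * e.2 : ℕ) - f e.1 j)
    (fun e he ↦ pairwise_disjoint_ediv_pair hM0 (hf e.1 (mem_product.1 he).1))
    (fun e _ j _ ↦ card_pair (by lia))
    (by simpa [ZMod.card, card_product] using h)
  refine ⟨shiftedColor w R g, hasSyndeticFibers_shiftedColor g, fun e he c ↦ ?_⟩
  obtain ⟨j, hj, hgj⟩ := hg (e, c) (by simp [he])
  exact ⟨j, mem_range.1 hj, fun t ht ↦ shiftedColor_add_eq hgj ht⟩

end ShiftedColor

section Progressions

open Filter Finset

lemma eventually_const_mul_pow_mul_pow_div_lt_one {A ρ : ℝ} (hA : 0 ≤ A) (p : ℕ) {s : ℕ}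
    (hs : s ≠ 0) (hρ0 : 0 ≤ ρ) (hρ1 : ρ < 1) :
    ∀ᶠ k : ℕ in atTop, A * k ^ p * ρ ^ (k / s) < 1 := by
  have hlim : Tendsto (fun n : ℕ ↦ A * (2 * s) ^ p * ((n : ℝ) ^ p * ρ ^ n)) atTop (nhds 0) := by
    simpa using (tendsto_pow_const_mul_const_pow_of_abs_lt_one p
      (by rwa [abs_of_nonneg hρ0])).const_mul (A * (2 * s) ^ p)
  filter_upwards [(hlim.comp (Nat.tendsto_div_const_atTop hs)).eventually_lt_const one_pos,
    eventually_ge_atTop s] with k hlt hsk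
  have hk : k ≤ 2 * s * (k / s) := by
    have h1 : s * 1 ≤ s * (k / s) :=
      Nat.mul_le_mul_left s ((Nat.one_le_div_iff (Nat.pos_of_ne_zero hs)).2 hsk)
    have h2 := Nat.div_add_mod k s
    have h3 := Nat.mod_lt k (Nat.pos_of_ne_zero hs)
    lia
  calc A * k ^ p * ρ ^ (k / s)
      ≤ A * (2 * s * (k / s : ℕ)) ^ p * ρ ^ (k / s) := by gcongr; exact_mod_cast hk
    _ = A * (2 * s) ^ p * ((k / s : ℕ) ^ p * ρ ^ (k / s)) := by ring
    _ < 1 := hlt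

/-- Along every real progression `α + i * δ` of length `k`, with `α` and `δ` in the ranges relevant
to progressions of blocks, each colour `c` occurs robustly: for some `i < k`, all integers at
distance less than `1` from the `i`-th term have colour `c`. -/
def HitsProgressions {κ : Type*} (k : ℕ) (col : ℤ → κ) : Prop :=
  ∀ α ∈ Set.Ico (-(k : ℝ) ^ 2) (k ^ 2), ∀ δ ∈ Set.Ico (1 / 2 : ℝ) k, ∀ c,
    ∃ i < k, ∀ b : ℤ, |b - (α + i * δ)| < 1 → col b = c

lemma exists_eq_ediv_add_of_abs_sub_lt_one {k i : ℕ} (hi : i < k) {α δ : ℝ} {b : ℤ}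
    (hb : |b - (α + i * δ)| < 1) :
    ∃ t < 3, b = (⌊k * α⌋ + i * ⌊k * δ⌋) / k + (t : ℕ) := by
  -- Rounding `α` and `δ` down to multiples of `1 / k` lowers the `i`-th term by less than `1`.
  have hk : (0 : ℝ) < k := by exact_mod_cast i.zero_le.trans_lt hi
  set y := ⌊k * α⌋ + i * ⌊k * δ⌋ with hy
  have hik : (i : ℝ) + 1 ≤ k := by exact_mod_cast hi
  have hlow : (y : ℝ) ≤ k * (α + i * δ) := by
    have := mul_le_mul_of_nonneg_left (Int.floor_le (k * δ)) i.cast_nonneg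
    push_cast [hy]
    linarith [Int.floor_le (k * α)]
  have hupp : k * (α + i * δ) < y + k := by
    have := mul_le_mul_of_nonneg_left (Int.lt_floor_add_one (k * δ)).le i.cast_nonneg
    push_cast [hy]
    linarith [Int.lt_floor_add_one (k * α)]
  obtain ⟨hb1, hb2⟩ := abs_lt.1 hb
  have hyb : y < (b + 1) * k := by
    have : (y : ℝ) < (b + 1) * k := by nlinarith
    exact_mod_cast this
  have hby : (b - 2) * k < y := by
    have : ((b : ℝ) - 2) * k < y := by nlinarith
    exact_mod_cast this
  have hk' : (0 : ℤ) < k := by exact_mod_cast hk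
  have h1 : y / k < b + 1 := Int.ediv_lt_of_lt_mul hk' hyb
  have h2 : b - 2 ≤ y / k := Int.le_ediv_of_mul_le hk' hby.le
  exact ⟨(b - y / k).toNat, by lia, by lia⟩

/-- The pairs `(n, m)` which, read as the progression `n / k + i * (m / k)`, discretize the real
progressions of `HitsProgressions k`. -/
noncomputable def progressionGrid (k : ℕ) : Finset (ℤ × ℤ) :=
  Ico (-(k : ℤ) ^ 3) ((k : ℤ) ^ 3) ×ˢ {m ∈ Ico (0 : ℤ) ((k : ℤ) ^ 2) | (k : ℤ) ≤ 3 * m}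

lemma card_progressionGrid_le (k : ℕ) : #(progressionGrid k) ≤ 2 * k ^ 5 := by
  calc #(progressionGrid k) ≤ 2 * k ^ 3 * k ^ 2 := by
        rw [progressionGrid, card_product]
        refine Nat.mul_le_mul ?_ ((card_filter_le _ _).trans ?_) <;> rw [Int.card_Ico] <;> lia
    _ = 2 * k ^ 5 := by ring

lemma floor_mem_progressionGrid {k : ℕ} (hk : 6 ≤ k) {α δ : ℝ}
    (hα : α ∈ Set.Ico (-(k : ℝ) ^ 2) (k ^ 2)) (hδ : δ ∈ Set.Ico (1 / 2 : ℝ) k) :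
    (⌊k * α⌋, ⌊k * δ⌋) ∈ progressionGrid k := by
  have hkr : (6 : ℝ) ≤ k := by exact_mod_cast hk
  have hδk : (k : ℝ) ≤ 3 * ⌊k * δ⌋ := by nlinarith [Int.lt_floor_add_one (k * δ), hδ.1]
  simp only [progressionGrid, mem_product, mem_filter, mem_Ico, Int.le_floor, Int.floor_lt]
  push_cast
  refine ⟨⟨?_, ?_⟩, ⟨?_, ?_⟩, by exact_mod_cast hδk⟩ <;> nlinarith [hα.1, hα.2, hδ.1, hδ.2]

lemma add_le_ediv_of_mem_progressionGrid {k : ℕ} {e : ℤ × ℤ} (he : e ∈ progressionGrid k)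
    (n j : ℕ) :
    (e.1 + (3 * n * j : ℕ) * e.2) / k + n ≤ (e.1 + (3 * n * (j + 1) : ℕ) * e.2) / k := by
  simp only [progressionGrid, mem_product, mem_filter, mem_Ico] at he
  rw [← Int.add_mul_ediv_right _ _ (by lia)]
  refine Int.ediv_le_ediv (by lia) ?_
  have := mul_le_mul_of_nonneg_left he.2.2 (Nat.cast_nonneg (α := ℤ) n)
  push_cast at this ⊢
  linarith

lemma exists_hitsProgressions {R k : ℕ} [NeZero R] (hk : 6 ≤ k)
    (h : 2 * R * k ^ 5 * (1 - ((3 * R : ℕ) : ℝ)⁻¹ ^ 2) ^ (k / (3 * (6 * R))) < 1) :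
    ∃ col : ℤ → Fin R, HasSyndeticFibers (6 * R) col ∧ HitsProgressions k col := by
  have hcard : (#(progressionGrid k) : ℝ) ≤ 2 * k ^ 5 := by
    exact_mod_cast card_progressionGrid_le k
  have hρ : (0 : ℝ) ≤ 1 - ((3 * R : ℕ) : ℝ)⁻¹ ^ 2 :=
    sub_nonneg.2 (pow_le_one₀ (by positivity) (Nat.cast_inv_le_one _))
  -- Only every `3 * (6 * R)`-th term is used, which puts consecutive windows at least two periods
  -- `3 * R` apart, so that their colours depend on disjoint sets of shifts.
  obtain ⟨col, hsyn, hhit⟩ := exists_coloring_hitting_windows 3 R (E := progressionGrid k)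
    (f := fun e j ↦ (e.1 + (3 * (6 * R) * j : ℕ) * e.2) / k) (J := k / (3 * (6 * R)))
    (fun e he j ↦ by
      simpa [← mul_assoc] using add_le_ediv_of_mem_progressionGrid he (6 * R) j) <|
    calc (#(progressionGrid k) : ℝ) * R * _ ≤ 2 * k ^ 5 * R * _ := by gcongr
      _ < 1 := by linarith
  refine ⟨col, by rwa [show 6 * R = 2 * (3 * R) by ring], fun α hα δ hδ c ↦ ?_⟩
  obtain ⟨j, hj, hwindow⟩ := hhit _ (floor_mem_progressionGrid hk hα hδ) c
  have hjk : 3 * (6 * R) * j < k :=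
    (Nat.mul_lt_mul_of_pos_left hj (by have := NeZero.pos R; positivity)).trans_le
      (Nat.mul_div_le k _)
  refine ⟨3 * (6 * R) * j, hjk, fun b hb ↦ ?_⟩
  obtain ⟨t, ht, rfl⟩ := exists_eq_ediv_add_of_abs_sub_lt_one hjk hb
  exact hwindow t ht

lemma eventually_exists_hitsProgressions (R : ℕ) [NeZero R] : ∀ᶠ k : ℕ in atTop,
    ∃ col : ℤ → Fin R, HasSyndeticFibers (6 * R) col ∧ HitsProgressions k col := by
  have hρ0 : (0 : ℝ) ≤ 1 - ((3 * R : ℕ) : ℝ)⁻¹ ^ 2 :=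
    sub_nonneg.2 (pow_le_one₀ (by positivity) (Nat.cast_inv_le_one _))
  have hρ1 : 1 - ((3 * R : ℕ) : ℝ)⁻¹ ^ 2 < 1 := by
    have := NeZero.pos R
    exact sub_lt_self _ (by positivity)
  filter_upwards [eventually_ge_atTop 6, eventually_const_mul_pow_mul_pow_div_lt_one
    (A := 2 * R) (by positivity) 5 (s := 3 * (6 * R)) (by simp [NeZero.ne R]) hρ0 hρ1] with k hk6 hk
  exact exists_hitsProgressions hk6 hk

end Progressions

namespace IsAPeps

variable {ε : ℝ} {k : ℕ} {x : ℕ → ℤ}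

lemma segment (h : IsAPeps ε k x) {j n : ℕ} (hjn : j + n ≤ k) :
    IsAPeps ε n fun i ↦ x (j + i) := by
  obtain ⟨a, d, hd, h⟩ := h
  refine ⟨a + j * d, d, hd, fun i hi ↦ ?_⟩
  simpa [add_mul, add_assoc] using h (j + i) (by lia)

lemma sub_const (h : IsAPeps ε k x) (v : ℤ) : IsAPeps ε k fun i ↦ x i - v := by
  obtain ⟨a, d, hd, h⟩ := h
  refine ⟨a - v, d, hd, fun i hi ↦ ?_⟩
  push_cast
  rw [sub_add_eq_add_sub, sub_sub_sub_cancel_right]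
  exact h i hi

end IsAPeps

/-- The colouring `ch` has no monochromatic `AP_k(ε)` in `{1, …, N}`. -/
def AvoidsMonoAP {κ : Type*} (ε : ℝ) (k N : ℕ) (ch : ℤ → κ) : Prop :=
  ¬ ∃ x : ℕ → ℤ, (∀ i < k, x i ∈ Finset.Icc (1 : ℤ) N) ∧
    (∀ i < k, ∀ j < k, ch (x i) = ch (x j)) ∧ IsAPeps ε k x

lemma avoidsMonoAP_of_lt {κ : Type*} {ε : ℝ} {k N : ℕ} (hε : ε ≤ 1 / 2) (hN : N < k)
    (ch : ℤ → κ) : AvoidsMonoAP ε k N ch := by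
  rintro ⟨x, hx, -, hap⟩
  have hcard := Finset.card_le_card_of_injOn (s := Finset.range k) x
    (fun i hi ↦ hx i (Finset.mem_range.1 hi))
    (by simpa using (hap.strictMonoOn hε).injOn)
  simp only [Finset.card_range, Int.card_Icc] at hcard
  lia

section Blocks

lemma exists_eq_of_le_add_one {B : ℕ → ℤ} {n : ℕ} {b : ℤ} (hB : ∀ i < n, B (i + 1) ≤ B i + 1)
    (h0 : B 0 ≤ b) (hn : b ≤ B n) : ∃ i ≤ n, B i = b := by
  induction n with
  | zero => exact ⟨0, le_rfl, h0.antisymm hn⟩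
  | succ n ih =>
    rcases hn.eq_or_lt with rfl | hlt
    · exact ⟨n + 1, le_rfl, rfl⟩
    · obtain ⟨i, hi, hib⟩ := ih (fun i hi ↦ hB i (by lia)) (by have := hB n (by lia); lia)
      exact ⟨i, by lia, hib⟩

lemma exists_eq_succ_of_lt_add {B : ℕ → ℤ} {n : ℕ} (hB : ∀ j < n, B j ≤ B (j + 1))
    (hn : B n < B 0 + n) : ∃ j < n, B j = B (j + 1) := by
  by_contra! hne
  have hgrow : ∀ m ≤ n, B 0 + m ≤ B m := by
    intro m
    induction m with
    | zero => simp
    | succ m ih =>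
      intro hm
      have := (hB m hm).lt_of_ne (hne m hm)
      have := ih (by lia)
      push_cast
      lia
  exact (hgrow n le_rfl).not_gt hn

lemma HasSyndeticFibers.lt_add_of_forall_ne {κ : Type*} {ℓ n : ℕ} {col : ℤ → κ} {c : κ}
    {B : ℕ → ℤ} (hcol : HasSyndeticFibers ℓ col) (hB : ∀ i < n, B (i + 1) ≤ B i + 1)
    (hne : ∀ i ≤ n, col (B i) ≠ c) : B n < B 0 + ℓ := by
  by_contra! hle
  obtain ⟨b, ⟨hb0, hbℓ⟩, hbc⟩ := hcol (B 0) c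
  obtain ⟨i, hi, rfl⟩ := exists_eq_of_le_add_one hB hb0 (hbℓ.le.trans hle)
  exact hne i hi hbc

lemma abs_ediv_sub_lt_one {L : ℕ} (hL : 0 < L) {n : ℤ} {y : ℝ} (h : |n - y| < L / 2) :
    |((n / L : ℤ) : ℝ) - (y / L - 1 / 2)| < 1 := by
  have hLr : (0 : ℝ) < L := by exact_mod_cast hL
  have hlow : ((n / L : ℤ) : ℝ) * L ≤ n := by exact_mod_cast Int.ediv_mul_le n (by lia)
  have hupp : (n : ℝ) < (((n / L : ℤ) : ℝ) + 1) * L := by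
    exact_mod_cast Int.lt_ediv_add_one_mul_self n (by lia)
  have hy : y / L * L = y := div_mul_cancel₀ y hLr.ne'
  obtain ⟨h1, h2⟩ := abs_lt.1 h
  rw [abs_lt]
  constructor <;> nlinarith

lemma HitsProgressions.exists_block_eq {κ : Type*} {miss : ℤ → κ} {k L Q : ℕ} {x : ℕ → ℤ}
    {ε a d : ℝ} (hmiss : HitsProgressions k miss) (hL : 0 < L) (hQ : (Q : ℝ) ≤ k ^ 2)
    (hx : x 0 ∈ Finset.Icc (1 : ℤ) (L * Q : ℕ)) (hap : ∀ i < k, |(x i : ℝ) - (a + i * d)| < ε * d)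
    (hεd : ε * d ≤ L / 2) (hd : (L : ℝ) / 2 ≤ d) (hdk : d < L * k) (c : κ) :
    ∃ i < k, miss ((x i - 1) / L) = c := by
  have hLr : (0 : ℝ) < L := by exact_mod_cast hL
  have hk : 0 < k := by
    by_contra! h
    simp only [Nat.le_zero.1 h, Nat.cast_zero, mul_zero] at hdk
    linarith
  obtain ⟨hx1, hxQ⟩ := Finset.mem_Icc.1 hx
  have hx1' : (1 : ℝ) ≤ x 0 := by exact_mod_cast hx1
  have hxQ' : (x 0 : ℝ) ≤ L * Q := by exact_mod_cast hxQ
  have hα : (a - 1) / L - 1 / 2 ∈ Set.Ico (-(k : ℝ) ^ 2) (k ^ 2) := by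
    have hkr : (1 : ℝ) ≤ k ^ 2 := one_le_pow₀ (by exact_mod_cast hk)
    obtain ⟨h1, h2⟩ := abs_lt.1 (hap 0 hk)
    simp only [Nat.cast_zero, zero_mul, add_zero] at h1 h2
    have hlow : -(1 / 2) < (a - 1) / L := by rw [lt_div_iff₀ hLr]; linarith
    have hupp : (a - 1) / L < Q + 1 / 2 := by rw [div_lt_iff₀ hLr]; linarith
    constructor <;> linarith
  have hδ : d / L ∈ Set.Ico (1 / 2 : ℝ) k :=
    ⟨by rw [le_div_iff₀ hLr]; linarith, by rw [div_lt_iff₀ hLr]; linarith⟩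
  obtain ⟨i, hi, hic⟩ := hmiss _ hα _ hδ c
  refine ⟨i, hi, hic _ ?_⟩
  have hnear : |((x i - 1 : ℤ) : ℝ) - (a - 1 + i * d)| < L / 2 := by
    refine lt_of_eq_of_lt ?_ ((hap i hi).trans_le hεd)
    push_cast
    congr 1
    ring
  convert abs_ediv_sub_lt_one hL hnear using 2
  ring

variable {r : ℕ}

/-- Cut the integers into the blocks `{B * L + 1, …, (B + 1) * L}`, and colour each block `B` by the
translate of `ch` on `{1, …, L}`, its `r` colours being renamed to the colours in `Fin (r + 1)`
other than `miss B`. -/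
def blockColoring (L : ℕ) (miss : ℤ → Fin (r + 1)) (ch : ℤ → Fin r) (x : ℤ) : Fin (r + 1) :=
  (miss ((x - 1) / L)).succAbove (ch (x - L * ((x - 1) / L)))

variable {ε : ℝ} {k k' L Q ℓ : ℕ} {x : ℕ → ℤ} {miss : ℤ → Fin (r + 1)} {ch : ℤ → Fin r}

lemma AvoidsMonoAP.not_monochromatic_block (hch : AvoidsMonoAP ε k' L ch) (hL : 0 < L) {B : ℤ}
    (hB : ∀ i < k', (x i - 1) / L = B)
    (hmono : ∀ i < k', ∀ j < k', blockColoring L miss ch (x i) = blockColoring L miss ch (x j)) :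
    ¬ IsAPeps ε k' x := by
  refine fun hap ↦ hch ⟨_, fun i hi ↦ ?_, fun i hi j hj ↦ ?_, hap.sub_const (L * B)⟩
  · have h0 := Int.emod_nonneg (x i - 1) (b := L) (by lia)
    have h1 := Int.emod_lt_of_pos (x i - 1) (b := L) (by lia)
    rw [Int.emod_def, hB i hi] at h0 h1
    rw [Finset.mem_Icc]
    lia
  · have := hmono i hi j hj
    simp only [blockColoring, hB i hi, hB j hj] at this
    exact Fin.succAbove_right_injective this

lemma exists_block_run (hL : 0 < L) (hx : MonotoneOn x (Set.Iio k)) (hℓ : ℓ * k' < k)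
    (hspan : (x (ℓ * k') - 1) / L < (x 0 - 1) / L + ℓ) :
    ∃ j, j + k' ≤ k ∧ ∃ B : ℤ, ∀ i < k', (x (j + i) - 1) / L = B := by
  have hmono : ∀ i j, i ≤ j → j < k → (x i - 1) / (L : ℤ) ≤ (x j - 1) / L := fun i j hij hj ↦
    Int.ediv_le_ediv (by lia) (sub_le_sub_right (hx (hij.trans_lt hj) hj hij) 1)
  have hle : ∀ j < ℓ, (j + 1) * k' < k := fun j hj ↦ (Nat.mul_le_mul_right k' hj).trans_lt hℓ
  obtain ⟨j, hj, hjB⟩ := exists_eq_succ_of_lt_add (B := fun j ↦ (x (j * k') - 1) / (L : ℤ))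
    (fun j hj ↦ hmono _ _ (Nat.mul_le_mul_right k' j.le_succ) (hle j hj)) (by simpa using hspan)
  have hjk := hle j hj
  simp only [Nat.add_mul, one_mul] at hjB hjk
  exact ⟨j * k', hjk.le, _, fun i hi ↦
    ((hmono _ _ (by lia) hjk).trans_eq hjB.symm).antisymm (hmono _ _ (by lia) (by lia))⟩

lemma mul_step_le_half (hε : 0 < ε) (hε2 : ε ≤ 1 / 2) (hk : 4 ≤ k) (hQ : (Q : ℝ) ≤ k / (4 * ε))
    (hx : ∀ i < k, x i ∈ Finset.Icc (1 : ℤ) (L * Q : ℕ)) {a d : ℝ} (hd : 0 < d)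
    (hap : ∀ i < k, |(x i : ℝ) - (a + i * d)| < ε * d) : ε * d ≤ L / 2 := by
  have hkr : (4 : ℝ) ≤ k := by exact_mod_cast hk
  have hfirst := (abs_lt.1 (hap 0 (by lia))).2
  have hlast := (abs_lt.1 (hap (k - 1) (by lia))).1
  rw [Nat.cast_pred (by lia)] at hlast
  have h1 : (1 : ℝ) ≤ x 0 := by exact_mod_cast (Finset.mem_Icc.1 (hx 0 (by lia))).1
  have hLQ : (x (k - 1) : ℝ) ≤ L * Q := by
    exact_mod_cast (Finset.mem_Icc.1 (hx (k - 1) (by lia))).2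
  have hspan : k / 2 * d ≤ L * Q := by
    simp only [Nat.cast_zero, zero_mul, add_zero] at hfirst
    nlinarith
  refine le_of_mul_le_mul_left (?_ : k * (ε * d) ≤ k * (L / 2 : ℝ)) (by linarith)
  calc k * (ε * d) = 2 * ε * (k / 2 * d) := by ring
    _ ≤ 2 * ε * (L * Q) := by gcongr ?_ * ?_
    _ ≤ 2 * ε * (L * (k / (4 * ε))) := by gcongr
    _ = k * (L / 2) := by field_simp; ring

lemma avoidsMonoAP_blockColoring (hε : 0 < ε) (hε2 : ε ≤ 1 / 2) (hkε : 2 / ε ≤ k) (hL : 0 < L)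
    (hQ : (Q : ℝ) ≤ k / (4 * ε)) (hℓ : ℓ * k' < k) (hch : AvoidsMonoAP ε k' L ch)
    (hsyn : HasSyndeticFibers ℓ miss) (hhits : HitsProgressions k miss) :
    AvoidsMonoAP ε k (L * Q) (blockColoring L miss ch) := by
  rintro ⟨x, hx, hmono, hap⟩
  have hmiss : ∀ i < k, miss ((x i - 1) / L) ≠ blockColoring L miss ch (x 0) := fun i hi ↦ by
    rw [hmono 0 (by lia) i hi]
    exact (Fin.succAbove_ne _ _).symm
  have ⟨a, d, hd, hxd⟩ := hap
  have hLr : (0 : ℝ) < L := by exact_mod_cast hL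
  rw [div_le_iff₀ hε] at hkε
  have hk : (4 : ℝ) ≤ k := by nlinarith
  have hεd := mul_step_le_half hε hε2 (by exact_mod_cast hk) hQ hx hd hxd
  rcases le_or_gt ((L : ℝ) / 2) d with hlarge | hsmall
  · have hQk : (Q : ℝ) ≤ k ^ 2 := by
      rw [le_div_iff₀ (by positivity)] at hQ
      nlinarith
    have hdk : d < L * k := by nlinarith
    obtain ⟨i, hi, hic⟩ := hhits.exists_block_eq hL hQk (hx 0 (by lia)) hxd hεd hlarge hdk _
    exact hmiss i hi hic
  · have hadvance : ∀ i < ℓ * k', (x (i + 1) - 1) / L ≤ (x i - 1) / L + 1 := fun i hi ↦ by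
      have h1 := (abs_lt.1 (hxd i (by lia))).1
      have h2 := (abs_lt.1 (hxd (i + 1) (by lia))).2
      push_cast at h2
      have : (x (i + 1) : ℝ) ≤ x i + L := by nlinarith
      have : x (i + 1) ≤ x i + L := by exact_mod_cast this
      rw [← Int.add_mul_ediv_right _ 1 (by lia : (L : ℤ) ≠ 0)]
      exact Int.ediv_le_ediv (by lia) (by lia)
    have hspan := hsyn.lt_add_of_forall_ne (B := fun i ↦ (x i - 1) / L) hadvance
      fun i hi ↦ hmiss i (by lia)
    obtain ⟨j, hj, B, hB⟩ := exists_block_run hL (hap.strictMonoOn hε2).monotoneOn hℓ hspan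
    exact hch.not_monochromatic_block hL hB
      (fun i hi i' hi' ↦ hmono _ (by lia) _ (by lia)) (hap.segment hj)

end Blocks

section LowerBound

open Filter Topology

lemma exists_mul_lt_and_div_two_mul_le {k ℓ : ℕ} (hℓ : 0 < ℓ) (hk : 2 * ℓ ≤ k) :
    ∃ k' : ℕ, ℓ * k' < k ∧ (k : ℝ) / (2 * ℓ) ≤ k' := by
  have h1 := Nat.div_add_mod (k - 1) ℓ
  have h2 := Nat.mod_lt (k - 1) hℓ
  refine ⟨(k - 1) / ℓ, by lia, ?_⟩
  have : k ≤ (k - 1) / ℓ * (2 * ℓ) := by lia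
  rw [div_le_iff₀ (by positivity)]
  exact_mod_cast this

lemma exists_avoidsMonoAP_succ {r : ℕ} {ε : ℝ} {k k' L ℓ : ℕ} {miss : ℤ → Fin (r + 1)}
    {ch : ℤ → Fin r} (hε : 0 < ε) (hε2 : ε ≤ 1 / 2) (hkε : 2 / ε ≤ k) (hL : 0 < L)
    (hℓ : ℓ * k' < k) (hch : AvoidsMonoAP ε k' L ch) (hsyn : HasSyndeticFibers ℓ miss)
    (hhits : HitsProgressions k miss) :
    ∃ N : ℕ, L * (k / (8 * ε)) ≤ N ∧ ∃ ch' : ℤ → Fin (r + 1), AvoidsMonoAP ε k N ch' := by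
  refine ⟨L * ⌊(k : ℝ) / (4 * ε)⌋₊, ?_, _, avoidsMonoAP_blockColoring hε hε2 hkε hL
    (Nat.floor_le (by positivity)) hℓ hch hsyn hhits⟩
  have h2 : 2 ≤ (k : ℝ) / (4 * ε) := by
    rw [div_le_iff₀ hε] at hkε
    rw [le_div_iff₀ (by positivity)]
    nlinarith
  calc (L : ℝ) * (k / (8 * ε)) = L * (k / (4 * ε) / 2) := by ring
    _ ≤ L * ⌊(k : ℝ) / (4 * ε)⌋₊ := by gcongr; linarith [Nat.lt_floor_add_one ((k : ℝ) / (4 * ε))]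
    _ = _ := by push_cast; rfl

theorem approximate_van_der_waerden_lower_general (r : ℕ) (hr : 1 ≤ r) :
    ∃ c C : ℝ, 0 < c ∧ 0 < C ∧ ∀ ε : ℝ, 0 < ε → ε ≤ 1 / 2 → ∀ k : ℕ, C / ε ≤ k →
      ∃ N : ℕ, c * k ^ r / ε ^ (r - 1) ≤ N ∧ ∃ ch : ℤ → Fin r, AvoidsMonoAP ε k N ch := by
  induction r, hr using Nat.le_induction with
  | base =>
    refine ⟨1 / 2, 1, by norm_num, one_pos, fun ε hε hε2 k hk ↦ ?_⟩
    have hk2 : (2 : ℝ) ≤ k := by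
      rw [div_le_iff₀ hε] at hk
      nlinarith
    have hk2' : 2 ≤ k := by exact_mod_cast hk2
    refine ⟨k - 1, ?_, fun _ ↦ 0, avoidsMonoAP_of_lt hε2 (by lia) _⟩
    rw [Nat.cast_pred (by lia)]
    simp only [pow_one, tsub_self, pow_zero, div_one]
    linarith
  | succ r hr ih =>
    obtain ⟨c, C, hc, hC, ih⟩ := ih
    obtain ⟨k₀, hk₀⟩ := eventually_atTop.1 (eventually_exists_hitsProgressions (r + 1))
    set ℓ : ℕ := 6 * (r + 1)
    have hℓ : 0 < ℓ := by positivity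
    have hℓ1 : (1 : ℝ) ≤ ℓ := by exact_mod_cast hℓ
    refine ⟨c / (2 * ℓ) ^ r / 8, 2 * ℓ * (C + 1) + k₀, by positivity, by positivity,
      fun ε hε hε2 k hk ↦ ?_⟩
    have hk₀k : (k₀ : ℝ) ≤ 2 * ℓ * (C + 1) + k₀ := le_add_of_nonneg_left (by positivity)
    have hℓk : 2 * ℓ ≤ 2 * ℓ * (C + 1) + k₀ := by nlinarith [k₀.cast_nonneg (α := ℝ)]
    have hkk : 2 * ℓ * (C + 1) + k₀ ≤ (k : ℝ) :=
      (le_div_self (by positivity) hε (by linarith)).trans hk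
    obtain ⟨k', hk'k, hk'⟩ : ∃ k' : ℕ, ℓ * k' < k ∧ (k : ℝ) / (2 * ℓ) ≤ k' :=
      exists_mul_lt_and_div_two_mul_le hℓ (by exact_mod_cast hℓk.trans hkk)
    have hCk' : C / ε ≤ k' :=
      calc C / ε = 2 * ℓ * C / ε / (2 * ℓ) := by field_simp
        _ ≤ (2 * ℓ * (C + 1) + k₀) / ε / (2 * ℓ) := by gcongr; linarith
        _ ≤ k / (2 * ℓ) := by gcongr
        _ ≤ k' := hk'
    obtain ⟨L, hL, ch, hch⟩ := ih ε hε hε2 k' hCk'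
    have hk'pos : (0 : ℝ) < k' := lt_of_lt_of_le (by positivity) hCk'
    have hLpos : (0 : ℝ) < L := lt_of_lt_of_le (by positivity) hL
    obtain ⟨miss, hsyn, hhits⟩ := hk₀ k (by exact_mod_cast hk₀k.trans hkk)
    obtain ⟨N, hN, hch'⟩ := exists_avoidsMonoAP_succ hε hε2
      (le_trans (by gcongr; linarith) hk) (by exact_mod_cast hLpos) hk'k hch hsyn hhits
    refine ⟨N, ?_, hch'⟩
    calc c / (2 * ℓ) ^ r / 8 * (k : ℝ) ^ (r + 1) / ε ^ r
        = c * (k / (2 * ℓ)) ^ r / ε ^ (r - 1) * (k / (8 * ε)) := by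
          rw [← pow_sub_one_mul (by lia : r ≠ 0) ε, div_pow, pow_succ]
          field_simp
      _ ≤ c * k' ^ r / ε ^ (r - 1) * (k / (8 * ε)) := by gcongr
      _ ≤ L * (k / (8 * ε)) := by gcongr
      _ ≤ N := hN

lemma tendsto_log_one_div_mul_nhdsGT_zero {a : ℝ} (ha : 0 < a) :
    Tendsto (fun ε ↦ Real.log (1 / (a * ε))) (𝓝[>] 0) atTop := by
  simpa [Function.comp_def, mul_comm] using Real.tendsto_log_atTop.comp
    (tendsto_inv_nhdsGT_zero.const_mul_atTop (inv_pos.2 ha))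

lemma exists_pos_forall_le_log (T : ℝ) : ∃ ε₀ : ℝ, 0 < ε₀ ∧ ∀ ε : ℝ, 0 < ε → ε ≤ ε₀ →
    ε ≤ 1 / 2 ∧ 1 ≤ Real.log (1 / ε) ∧ max 1 T ≤ Real.log (1 / (5 * ε)) := by
  have hhalf : ∀ᶠ ε : ℝ in 𝓝[>] 0, ε ≤ 1 / 2 :=
    Filter.Eventually.filter_mono nhdsWithin_le_nhds (eventually_le_nhds (by norm_num))
  have hlog := (tendsto_log_one_div_mul_nhdsGT_zero one_pos).eventually_ge_atTop 1
  have hlog5 := (tendsto_log_one_div_mul_nhdsGT_zero (a := 5) (by norm_num)).eventually_ge_atTop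
    (max 1 T)
  simp only [one_mul] at hlog
  obtain ⟨ε₀, hε₀, hsub⟩ :=
    mem_nhdsGT_iff_exists_Ioc_subset.1 (hhalf.and (hlog.and hlog5))
  exact ⟨ε₀, hε₀, fun ε hε hεε₀ ↦ hsub ⟨hε, hεε₀⟩⟩

lemma div_le_two_pow_mul_factorial_mul {C l ε : ℝ} {r : ℕ} (hr : 1 ≤ r) (hε : 0 < ε)
    (hl : max 1 C ≤ l) : C / ε ≤ 2 ^ r * (r.factorial : ℝ) * ε⁻¹ * l ^ r := by
  obtain ⟨h1, hC⟩ := max_le_iff.1 hl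
  have hconst : (1 : ℝ) ≤ 2 ^ r * r.factorial := one_le_mul_of_one_le_of_one_le
    (one_le_pow₀ one_le_two) (by exact_mod_cast r.factorial_pos)
  calc C / ε = 1 * ε⁻¹ * C := by rw [one_mul, div_eq_inv_mul]
    _ ≤ 1 * ε⁻¹ * l ^ r := by gcongr; exact hC.trans (le_self_pow₀ h1 (by lia))
    _ ≤ _ := by gcongr

end LowerBound

theorem approximate_van_der_waerden_lower (r : ℕ) (hr : 1 ≤ r) :
    ∃ ε₀ : ℝ, 0 < ε₀ ∧ ∃ c : ℝ, 0 < c ∧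
      ∀ ε : ℝ, 0 < ε → ε ≤ ε₀ →
        ∀ k : ℕ,
          (k : ℝ) ≥ 2 ^ r * (Nat.factorial r : ℝ) * ε⁻¹ * (Real.log (1 / (5 * ε))) ^ r →
          ∃ N : ℕ,
            (N : ℝ) ≥ c * (k : ℝ) ^ r /
              (ε ^ (r - 1) * (Real.log (1 / ε)) ^ (Nat.choose (r + 1) 2 - 1)) ∧
            ∃ ch : ℤ → Fin r,
              ¬ ∃ x : ℕ → ℤ,
                (∀ i < k, x i ∈ Finset.Icc (1 : ℤ) (N : ℤ)) ∧
                (∀ i < k, ∀ j < k, ch (x i) = ch (x j)) ∧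
                IsAPeps ε k x := by
  obtain ⟨c, C, hc, -, h⟩ := approximate_van_der_waerden_lower_general r hr
  obtain ⟨ε₀, hε₀, hsmall⟩ := exists_pos_forall_le_log C
  refine ⟨ε₀, hε₀, c, hc, fun ε hε hεε₀ k hk ↦ ?_⟩
  obtain ⟨hε2, hlog, hlog5⟩ := hsmall ε hε hεε₀
  obtain ⟨N, hN, hch⟩ := h ε hε hε2 k ((div_le_two_pow_mul_factorial_mul hr hε hlog5).trans hk)
  refine ⟨N, le_trans ?_ hN, hch⟩
  gcongr
  exact le_mul_of_one_le_right (by positivity) (one_le_pow₀ hlog)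
end

section
/- Let s ≥ 2 be an even integer, let M₀ > 0 be a real number, let L = lcm(s/2+1, s/2+2, …, s), and let d be a real number with M₀ < d ≤ (L/2)·M₀. Then there exists an index 1 ≤ j₀ ≤ s/2 such that |d − m·(s−j₀+1)·M₀| ≥ M₀/2 for every integer m. -/
/-!
If every `k` in a finite set `S` has a multiple `m * k * M` at distance less than `M / 2` from `d`,
then these multiples are integer multiples of `M` at distance less than `M` from each other, so they
are all equal to one `n * M`. Hence `n` is a multiple of `L = lcm S`. But no multiple of `L * M`
comes closer than `M / 2` to a point `d` with `M / 2 ≤ d ≤ (L - 1 / 2) * M`, because such a `d` lies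
between the consecutive multiples `0` and `L * M`.
-/

section

variable {K : Type*} [Field K] [LinearOrder K] [IsStrictOrderedRing K] {d M : K}

theorem eq_of_abs_sub_mul_lt_half {a b : ℤ} (ha : |d - a * M| < M / 2)
    (hb : |d - b * M| < M / 2) : a = b := by
  have hM : 0 < M := by linarith [abs_nonneg (d - a * M)]
  have hdist : |(b - a : K)| * M < 1 * M := calc
    |(b - a : K)| * M = |(d - a * M) - (d - b * M)| := by
      rw [show (d - a * M) - (d - b * M) = (b - a) * M by ring, abs_mul, abs_of_pos hM]
    _ ≤ |d - a * M| + |d - b * M| := abs_sub _ _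
    _ < 1 * M := by linarith
  have habs : |b - a| < 1 := by exact_mod_cast lt_of_mul_lt_mul_right hdist hM.le
  exact (sub_eq_zero.mp (Int.abs_lt_one_iff.mp habs)).symm

theorem exists_lcm_dvd_abs_sub_mul_lt_half {ι : Type*} {S : Finset ι} (hS : S.Nonempty)
    {f : ι → ℕ} (hnear : ∀ i ∈ S, ∃ m : ℤ, |d - m * f i * M| < M / 2) :
    ∃ n : ℤ, ((S.lcm f : ℕ) : ℤ) ∣ n ∧ |d - n * M| < M / 2 := by
  obtain ⟨i₀, hi₀⟩ := hS
  obtain ⟨m₀, hm₀⟩ := hnear i₀ hi₀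
  refine ⟨m₀ * f i₀, Int.natCast_dvd.mpr (Finset.lcm_dvd fun i hi ↦ ?_), by exact_mod_cast hm₀⟩
  obtain ⟨m, hm⟩ := hnear i hi
  have heq : m₀ * f i₀ = m * f i :=
    eq_of_abs_sub_mul_lt_half (by exact_mod_cast hm₀) (by exact_mod_cast hm)
  exact Int.natCast_dvd.mp (heq ▸ dvd_mul_left _ _)

theorem half_le_abs_sub_mul_of_dvd {L n : ℤ} (hLn : L ∣ n) (hd₁ : M / 2 ≤ d)
    (hd₂ : d ≤ (L - 1 / 2) * M) : M / 2 ≤ |d - n * M| := by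
  obtain hM | hM := le_total M 0
  · linarith [abs_nonneg (d - n * M)]
  obtain hn | hn := le_or_gt n 0
  · have hnM : (n : K) * M ≤ 0 := mul_nonpos_of_nonpos_of_nonneg (by exact_mod_cast hn) hM
    exact le_abs.mpr (.inl (by linarith))
  · have hLnM : (L : K) * M ≤ n * M :=
      mul_le_mul_of_nonneg_right (by exact_mod_cast Int.le_of_dvd hn hLn) hM
    exact le_abs.mpr (.inr (by linarith))

theorem exists_mem_forall_half_le_abs_sub_mul {ι : Type*} {S : Finset ι} (hS : S.Nonempty)
    {f : ι → ℕ} (hd₁ : M / 2 ≤ d) (hd₂ : d ≤ ((S.lcm f : ℕ) - 1 / 2) * M) :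
    ∃ i ∈ S, ∀ m : ℤ, M / 2 ≤ |d - m * f i * M| := by
  by_contra! hnear
  obtain ⟨n, hLn, hn⟩ := exists_lcm_dvd_abs_sub_mul_lt_half hS hnear
  exact hn.not_ge (half_le_abs_sub_mul_of_dvd hLn hd₁ (by exact_mod_cast hd₂))

theorem far_from_multiples_general {a s : ℕ} (has : a < s) (hd₁ : M / 2 ≤ d)
    (hd₂ : d ≤ (((Finset.Icc (a + 1) s).lcm id : ℕ) - 1 / 2) * M) :
    ∃ j₀ : ℕ, 1 ≤ j₀ ∧ j₀ ≤ s - a ∧ ∀ m : ℤ, M / 2 ≤ |d - m * (s - j₀ + 1) * M| := by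
  obtain ⟨k, hk, hfar⟩ :=
    exists_mem_forall_half_le_abs_sub_mul (Finset.nonempty_Icc.mpr has) hd₁ hd₂
  obtain ⟨hak, hks⟩ := Finset.mem_Icc.mp hk
  have hcast : (s : K) - (s - k + 1 : ℕ) + 1 = k := by
    push_cast [hks]
    ring
  exact ⟨s - k + 1, by lia, by lia, fun m ↦ hcast ▸ hfar m⟩

end

theorem far_from_multiples (s : ℕ) (hs : 2 ≤ s) (hse : Even s)
    (M₀ : ℝ) (hM : 0 < M₀) (d : ℝ) (hd1 : M₀ < d)
    (hd2 : d ≤ (((Finset.Icc (s / 2 + 1) s).lcm id : ℕ) : ℝ) / 2 * M₀) :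
    ∃ j₀ : ℕ, 1 ≤ j₀ ∧ j₀ ≤ s / 2 ∧
      ∀ m : ℤ, M₀ / 2 ≤ |d - (m : ℝ) * ((s : ℝ) - (j₀ : ℝ) + 1) * M₀| := by
  have hhalf : s - s / 2 = s / 2 := by grind
  exact hhalf ▸ far_from_multiples_general (by lia : s / 2 < s) (by linarith) (by linarith)
end

section
/- For every even integer s ≥ 2, lcm(s/2+1, s/2+2, …, s) = lcm(1, 2, …, s). -/
/-!
Every `a ≤ s / 2` has a multiple among any `a` consecutive integers, in particular in the upper
half of `{1, …, s}`, so discarding the lower half does not change the least common multiple.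
-/

theorem finset_lcm_eq_of_subset_of_forall_exists_dvd {α β : Type*} [CommMonoidWithZero α]
    [NormalizedGCDMonoid α] {s t : Finset β} {f : β → α} (hst : s ⊆ t)
    (h : ∀ a ∈ t, ∃ b ∈ s, f a ∣ f b) : s.lcm f = t.lcm f := by
  refine dvd_antisymm_of_normalize_eq Finset.normalize_lcm Finset.normalize_lcm
    (Finset.lcm_mono hst) (Finset.lcm_dvd fun a ha ↦ ?_)
  obtain ⟨b, hb, hab⟩ := h a ha
  exact hab.trans (Finset.dvd_lcm hb)

theorem exists_mem_Icc_succ_dvd_of_add_le {a m n : ℕ} (ha : 0 < a) (h : m + a ≤ n) :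
    ∃ b ∈ Finset.Icc (m + 1) n, a ∣ b := by
  refine ⟨a * (m / a + 1), Finset.mem_Icc.mpr ⟨Nat.lt_mul_div_succ m ha, ?_⟩, dvd_mul_right _ _⟩
  calc
    a * (m / a + 1) = a * (m / a) + a := Nat.mul_succ _ _
    _ ≤ m + a := Nat.add_le_add_right (Nat.mul_div_le m a) a
    _ ≤ n := h

theorem lcm_upper_half_general {m s : ℕ} (h : 2 * m ≤ s) :
    (Finset.Icc (m + 1) s).lcm id = (Finset.Icc 1 s).lcm id := by
  refine finset_lcm_eq_of_subset_of_forall_exists_dvd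
    (Finset.Icc_subset_Icc_left (Nat.le_add_left 1 m)) fun a ha ↦ ?_
  obtain ⟨ha_pos, has⟩ := Finset.mem_Icc.mp ha
  rcases le_or_gt a m with ham | hma
  · have hmas : m + a ≤ s := by lia
    exact exists_mem_Icc_succ_dvd_of_add_le ha_pos hmas
  · exact ⟨a, Finset.mem_Icc.mpr ⟨hma, has⟩, dvd_rfl⟩

theorem lcm_upper_half (s : ℕ) (hs : 2 ≤ s) (hse : Even s) :
    (Finset.Icc (s / 2 + 1) s).lcm id = (Finset.Icc 1 s).lcm id :=
  lcm_upper_half_general (Nat.mul_div_le s 2)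
end
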